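/- Let R be any commutative unital ring, ξ ∈ R^×, and Q_1, …, Q_r ∈ R. For each conjugacy class C of W_n choose any element w_C ∈ C_min and fix a reduced expression x_1⋯x_k of w_C, defining T_{w_C} := T_{x_1}⋯T_{x_k} ∈ H_{n,R}. Then the cocenter Tr(H_{n,R}) is spanned as an R-module by the images of the elements T_{w_C}, where C ranges over the conjugacy classes of W_n. -/

import Mathlib

/-! ## The complex reflection group `W_n` of type `G(r,1,n)`.

Generators are indexed by natural numbers: index `0` is `t` and index `i`
(for `1 ≤ i ≤ n-1`) is `s_i`; generators with index `≥ n` are killed by a relator,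
so this is a presentation of the complex reflection group of type `G(r,1,n)`. -/

noncomputable section

namespace CRG

/-- The relators of the presentation of `G(r,1,n)`. -/
def rels (r n : ℕ) : Set (FreeGroup ℕ) :=
  {w | (w = FreeGroup.of 0 ^ r)
    ∨ (∃ i, 1 ≤ i ∧ i < n ∧ w = FreeGroup.of i ^ 2)
    ∨ (2 ≤ n ∧ w = FreeGroup.of 0 * FreeGroup.of 1 * FreeGroup.of 0 * FreeGroup.of 1 *
        (FreeGroup.of 1 * FreeGroup.of 0 * FreeGroup.of 1 * FreeGroup.of 0)⁻¹)
    ∨ (∃ i, 2 ≤ i ∧ i < n ∧ w = FreeGroup.of 0 * FreeGroup.of i *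
        (FreeGroup.of i * FreeGroup.of 0)⁻¹)
    ∨ (∃ i, 1 ≤ i ∧ i + 1 < n ∧ w = FreeGroup.of i * FreeGroup.of (i + 1) * FreeGroup.of i *
        (FreeGroup.of (i + 1) * FreeGroup.of i * FreeGroup.of (i + 1))⁻¹)
    ∨ (∃ i j, 1 ≤ i ∧ i + 1 < j ∧ j < n ∧ w = FreeGroup.of i * FreeGroup.of j *
        (FreeGroup.of j * FreeGroup.of i)⁻¹)
    ∨ (∃ i, n ≤ i ∧ w = FreeGroup.of i)}

/-- The complex reflection group of type `G(r,1,n)`. -/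
abbrev W (r n : ℕ) : Type := PresentedGroup (rels r n)

/-- The generator with index `m` : `t` for `m = 0`, `s_m` for `1 ≤ m ≤ n-1`. -/
def gen (r n : ℕ) (m : ℕ) : W r n := PresentedGroup.of m

/-- The product in `W r n` of a word, given as a list of generator indices. -/
def wprod (r n : ℕ) (l : List ℕ) : W r n := (l.map (gen r n)).prod

/-- The set of standard generators `S = {t, s_1, …, s_{n-1}}`. -/
def S (r n : ℕ) : Set (W r n) := {x | ∃ m, m < n ∧ x = gen r n m}

/-- The length of `w` : the minimal length of a word in `t, s_1, …, s_{n-1}`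
expressing `w`. -/
def ell (r n : ℕ) (w : W r n) : ℕ :=
  sInf {k | ∃ l : List ℕ, (∀ m ∈ l, m < n) ∧ l.length = k ∧ wprod r n l = w}

/-- `l` is a reduced expression of `w`. -/
def IsReducedWord (r n : ℕ) (l : List ℕ) (w : W r n) : Prop :=
  (∀ m ∈ l, m < n) ∧ wprod r n l = w ∧ l.length = ell r n w

/-- `w →ˢ w'` : `w' = s w s⁻¹` for `s ∈ S`, with `ℓ(w') ≤ ℓ(w)` and either
`ℓ(sw) < ℓ(w)` or `ℓ(w s⁻¹) < ℓ(w)`. -/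
def Step (r n : ℕ) (s w w' : W r n) : Prop :=
  s ∈ S r n ∧ w' = s * w * s⁻¹ ∧ ell r n w' ≤ ell r n w ∧
    (ell r n (s * w) < ell r n w ∨ ell r n (w * s⁻¹) < ell r n w)

/-- `w → w'` : a finite (possibly empty) chain of steps `→ˢ` with `s ∈ S`. -/
def Arrow (r n : ℕ) : W r n → W r n → Prop :=
  Relation.ReflTransGen (fun w w' => ∃ s, Step r n s w w')

end CRG
/-! ## The cyclotomic Hecke algebra of type `G(r,1,n)`. -/

namespace CHA

open CRG

/-- The defining relations of the cyclotomic Hecke algebra `H_{n,R}(ξ; Q_1, …, Q_r)`,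
as a relation on the free algebra on generators `T_0, …, T_{n-1}`. -/
def rel (R : Type) [CommRing R] (r n : ℕ) (ξ : R) (Q : Fin r → R) :
    FreeAlgebra R (Fin n) → FreeAlgebra R (Fin n) → Prop := fun a b =>
  -- cyclotomic relation `(T_0 - Q_1) ⋯ (T_0 - Q_r) = 0`
  (∃ h0 : 0 < n,
    a = (List.ofFn (fun i : Fin r =>
          FreeAlgebra.ι R (⟨0, h0⟩ : Fin n) -
            algebraMap R (FreeAlgebra R (Fin n)) (Q i))).prod ∧
    b = 0)
  -- `T_0 T_1 T_0 T_1 = T_1 T_0 T_1 T_0`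
  ∨ (∃ (h0 : 0 < n) (h1 : 1 < n),
      a = FreeAlgebra.ι R (⟨0, h0⟩ : Fin n) * FreeAlgebra.ι R (⟨1, h1⟩ : Fin n) *
          FreeAlgebra.ι R (⟨0, h0⟩ : Fin n) * FreeAlgebra.ι R (⟨1, h1⟩ : Fin n) ∧
      b = FreeAlgebra.ι R (⟨1, h1⟩ : Fin n) * FreeAlgebra.ι R (⟨0, h0⟩ : Fin n) *
          FreeAlgebra.ι R (⟨1, h1⟩ : Fin n) * FreeAlgebra.ι R (⟨0, h0⟩ : Fin n))
  -- quadratic relations `(T_i - ξ)(T_i + 1) = 0`, `1 ≤ i ≤ n-1`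
  ∨ (∃ (i : ℕ) (hi : i < n), 1 ≤ i ∧
      a = (FreeAlgebra.ι R (⟨i, hi⟩ : Fin n) - algebraMap R (FreeAlgebra R (Fin n)) ξ) *
          (FreeAlgebra.ι R (⟨i, hi⟩ : Fin n) + 1) ∧
      b = 0)
  -- commuting relations `T_i T_j = T_j T_i`, `0 ≤ i < j-1 < n-1`
  ∨ (∃ (i j : ℕ) (hi : i < n) (hj : j < n), i + 1 < j ∧
      a = FreeAlgebra.ι R (⟨i, hi⟩ : Fin n) * FreeAlgebra.ι R (⟨j, hj⟩ : Fin n) ∧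
      b = FreeAlgebra.ι R (⟨j, hj⟩ : Fin n) * FreeAlgebra.ι R (⟨i, hi⟩ : Fin n))
  -- braid relations `T_i T_{i+1} T_i = T_{i+1} T_i T_{i+1}`, `1 ≤ i < n-1`
  ∨ (∃ (i : ℕ) (hi : i + 1 < n), 1 ≤ i ∧
      a = FreeAlgebra.ι R (⟨i, Nat.lt_of_succ_lt hi⟩ : Fin n) *
          FreeAlgebra.ι R (⟨i + 1, hi⟩ : Fin n) *
          FreeAlgebra.ι R (⟨i, Nat.lt_of_succ_lt hi⟩ : Fin n) ∧
      b = FreeAlgebra.ι R (⟨i + 1, hi⟩ : Fin n) *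
          FreeAlgebra.ι R (⟨i, Nat.lt_of_succ_lt hi⟩ : Fin n) *
          FreeAlgebra.ι R (⟨i + 1, hi⟩ : Fin n))

/-- The cyclotomic Hecke algebra `H_{n,R}(ξ; Q_1, …, Q_r)` of type `G(r,1,n)`. -/
abbrev Alg (R : Type) [CommRing R] (r n : ℕ) (ξ : R) (Q : Fin r → R) : Type :=
  RingQuot (rel R r n ξ Q)

/-- The generator `T_i` of the cyclotomic Hecke algebra. -/
def T (R : Type) [CommRing R] (r n : ℕ) (ξ : R) (Q : Fin r → R) (i : Fin n) :
    Alg R r n ξ Q :=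
  RingQuot.mkAlgHom R (rel R r n ξ Q) (FreeAlgebra.ι R i)

/-- The generator `T_m`, indexed by a natural number (`1` for out-of-range indices). -/
def Tn (R : Type) [CommRing R] (r n : ℕ) (ξ : R) (Q : Fin r → R) (m : ℕ) :
    Alg R r n ξ Q :=
  if h : m < n then T R r n ξ Q ⟨m, h⟩ else 1

/-- The product `T_{x_1} ⋯ T_{x_k}` attached to a word `x_1 ⋯ x_k` in the generators
of `W_n` (`0 ↦ T_0`, `i ↦ T_i`). -/
def Tw (R : Type) [CommRing R] (r n : ℕ) (ξ : R) (Q : Fin r → R) (l : List ℕ) :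
    Alg R r n ξ Q :=
  (l.map (Tn R r n ξ Q)).prod

/-- The `R`-submodule `[A,A]` of an `R`-algebra `A` spanned by all commutators `ab - ba`.
The quotient `A ⧸ [A,A]` is the cocenter `Tr(A)`. -/
def commutatorSubmodule (R A : Type) [CommRing R] [Ring A] [Algebra R A] : Submodule R A :=
  Submodule.span R {x | ∃ a b : A, x = a * b - b * a}

/-- An `r`-partition of `n` : an `r`-tuple of partitions (multisets of positive integers)
whose sizes sum to `n`. -/
def RPartition (r n : ℕ) : Type :=
  { p : Fin r → Multiset ℕ // (∀ i, ∀ x ∈ p i, 0 < x) ∧ (∑ i, (p i).sum) = n }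

/-- The Jucys–Murphy elements: `jm k = L_{k+1} = ξ^{-k} T_k ⋯ T_1 T_0 T_1 ⋯ T_k`
(`jm` is 0-indexed, so `jm 0 = L_1 = T_0`). -/
def jm (R : Type) [CommRing R] (r n : ℕ) (ξ : R) (Q : Fin r → R) (k : ℕ) :
    Alg R r n ξ Q :=
  Ring.inverse ξ ^ k •
    (((List.range k).map (fun j => Tn R r n ξ Q (k - j))).prod *
      Tn R r n ξ Q 0 *
      ((List.range k).map (fun j => Tn R r n ξ Q (j + 1))).prod)

end CHA

/-! In the cocenter, and modulo the products `T_{x_1} ⋯ T_{x_k}` for shorter words, a word may be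
conjugated by the invertible elements `T_i` with `i ≥ 1`, and a word which contains `s_i s_i` or
`t ^ r` vanishes. Conjugating in this way, every word becomes either *reducible* (it vanishes, and
its conjugacy class contains the value of a shorter word) or equivalent to a product of blocks of
the same length with conjugate value. A block is a coloured cycle on consecutive points. Blocks can
be exchanged, hence sorted, and the sorted list of blocks is determined by the conjugacy class, as
the action of `W_n` on coloured points shows. Consequently two words of minimal length in the same
conjugacy class agree up to shorter words, and every other word is, up to shorter words, zero or one
of these; induction on the length finishes the argument. -/

namespace CyclotomicCocenter

/-! ### Words in a sequence of letters -/

section Words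

variable {M N : Type*} [Monoid M] [Monoid N]

/-- The submonoid generated by the letters `g i` with `i ∈ I`. -/
def wordsIn (g : ℕ → M) (I : Set ℕ) : Submonoid M := Submonoid.closure (Set.image g I)

/-- The word `g a * g (a + 1) * ⋯ * g (a + m - 1)` of length `m`. -/
def ascProd (g : ℕ → M) (a : ℕ) : ℕ → M
  | 0 => 1
  | m + 1 => ascProd g a m * g (a + m)

/-- The word `g (a + m - 1) * ⋯ * g (a + 1) * g a` of length `m`. -/
def descProd (g : ℕ → M) (a : ℕ) : ℕ → M
  | 0 => 1
  | m + 1 => g (a + m) * descProd g a m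

/-- The element `x` wrapped symmetrically in the letters `g b, …, g (b + m - 1)`, from the inside
to the outside. -/
def wrap (g : ℕ → M) (x : M) (b : ℕ) : ℕ → M
  | 0 => x
  | m + 1 => g (b + m) * wrap g x b m * g (b + m)

/-- The palindrome `g (a + m) ⋯ g (a + 1) * g a * g (a + 1) ⋯ g (a + m)`, a lift of the
transposition exchanging the points `a` and `a + m + 1`. -/
def palindrome (g : ℕ → M) (a m : ℕ) : M := wrap g (g a) (a + 1) m

/-- The word `s_k ⋯ s_1 t^a s_1 ⋯ s_k`, where `t = g 0` and `s_i = g i`. It lifts the diagonal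
element with entry `ζ ^ a` at the point `k`, where points are counted from `0`. -/
def colourWord (g : ℕ → M) (a k : ℕ) : M := wrap g (g 0 ^ a) 1 k

/-- A coloured cycle: `(p, a)` stands for a cycle on `p + 1` consecutive points whose colours
multiply to `ζ ^ a`. Recording the length minus one makes every pair a legitimate cycle. -/
abbrev Block : Type := ℕ × ℕ

/-- The standard word for the block `(p, a)` on the points `k, …, k + p`. -/
def blockWord (g : ℕ → M) (k p a : ℕ) : M :=
  (if a = 0 then 1 else colourWord g a k) * ascProd g (k + 1) p

/-- The number of points occupied by a list of blocks. -/
def totalSize (L : List Block) : ℕ := (L.map fun x => x.1 + 1).sum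

/-- The product of the standard words of consecutive blocks, starting at the point `k`. -/
def blocksWord (g : ℕ → M) : ℕ → List Block → M
  | _, [] => 1
  | k, x :: L => blockWord g k x.1 x.2 * blocksWord g (k + x.1 + 1) L

lemma totalSize_cons (x : Block) (L : List Block) :
    totalSize (x :: L) = x.1 + 1 + totalSize L := by
  simp [totalSize]

lemma totalSize_append (L L' : List Block) :
    totalSize (L ++ L') = totalSize L + totalSize L' := by
  simp [totalSize]

lemma ascProd_succ' (g : ℕ → M) (a m : ℕ) :
    ascProd g a (m + 1) = g a * ascProd g (a + 1) m := by
  induction m generalizing a with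
  | zero => simp [ascProd]
  | succ m ih => rw [ascProd, ih, ascProd, mul_assoc, add_right_comm, add_assoc]

lemma descProd_succ' (g : ℕ → M) (a m : ℕ) :
    descProd g a (m + 1) = descProd g (a + 1) m * g a := by
  induction m generalizing a with
  | zero => simp [descProd]
  | succ m ih => rw [descProd, ih, descProd, mul_assoc, add_right_comm, add_assoc]

lemma ascProd_add (g : ℕ → M) (a m l : ℕ) :
    ascProd g a (m + l) = ascProd g a m * ascProd g (a + m) l := by
  induction l with
  | zero => simp [ascProd]
  | succ l ih => rw [← add_assoc, ascProd, ih, ascProd, mul_assoc, add_assoc]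

lemma wrap_eq (g : ℕ → M) (x : M) (b m : ℕ) :
    wrap g x b m = descProd g b m * x * ascProd g b m := by
  induction m with
  | zero => simp [wrap, descProd, ascProd]
  | succ m ih => simp only [wrap, ih, descProd, ascProd, mul_assoc]

lemma wrap_add (g : ℕ → M) (x : M) (b m l : ℕ) :
    wrap g x b (m + l) = wrap g (wrap g x b m) (b + m) l := by
  induction l with
  | zero => rfl
  | succ l ih => rw [← add_assoc, wrap, ih, wrap, add_assoc]

lemma palindrome_zero (g : ℕ → M) (a : ℕ) : palindrome g a 0 = g a := rfl

lemma palindrome_succ (g : ℕ → M) (a m : ℕ) :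
    palindrome g a (m + 1) = g (a + m + 1) * palindrome g a m * g (a + m + 1) := by
  rw [palindrome, wrap, add_right_comm, palindrome]

lemma colourWord_succ (g : ℕ → M) (a k : ℕ) :
    colourWord g a (k + 1) = g (k + 1) * colourWord g a k * g (k + 1) := by
  rw [colourWord, wrap, add_comm 1 k, colourWord]

lemma blockWord_zero (g : ℕ → M) (k p : ℕ) : blockWord g k p 0 = ascProd g (k + 1) p := by
  simp [blockWord]

lemma blockWord_of_ne_zero (g : ℕ → M) (k p : ℕ) {a : ℕ} (ha : a ≠ 0) :
    blockWord g k p a = colourWord g a k * ascProd g (k + 1) p := by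
  simp [blockWord, ha]

lemma blocksWord_append (g : ℕ → M) (k : ℕ) (L L' : List Block) :
    blocksWord g k (L ++ L') = blocksWord g k L * blocksWord g (k + totalSize L) L' := by
  induction L generalizing k with
  | nil => simp [blocksWord, totalSize]
  | cons x L ih =>
    rw [List.cons_append, blocksWord, ih, blocksWord, totalSize_cons, mul_assoc]
    simp only [add_assoc]

lemma blocksWord_append_pair (g : ℕ → M) (p a q b : ℕ) (pre suf : List Block) :
    blocksWord g 0 (pre ++ (p, a) :: (q, b) :: suf) = blocksWord g 0 pre *
      (blockWord g (totalSize pre) p a * blockWord g (totalSize pre + p + 1) q b) *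
      blocksWord g (totalSize pre + p + q + 2) suf := by
  rw [blocksWord_append, blocksWord, blocksWord, zero_add,
    show totalSize pre + p + 1 + q + 1 = totalSize pre + p + q + 2 by omega]
  simp only [mul_assoc]

lemma semiconjBy_ascProd {g : ℕ → M} {z : M} {a b m : ℕ}
    (h : ∀ i < m, SemiconjBy z (g (a + i)) (g (b + i))) :
    SemiconjBy z (ascProd g a m) (ascProd g b m) := by
  induction m with
  | zero => exact SemiconjBy.one_right z
  | succ m ih => exact (ih fun i hi => h i (by omega)).mul_right (h m (by omega))

lemma semiconjBy_wrap {g : ℕ → M} {z x y : M} {a b m : ℕ} (hxy : SemiconjBy z x y)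
    (h : ∀ i < m, SemiconjBy z (g (a + i)) (g (b + i))) :
    SemiconjBy z (wrap g x a m) (wrap g y b m) := by
  induction m with
  | zero => exact hxy
  | succ m ih =>
    exact ((h m (by omega)).mul_right (ih fun i hi => h i (by omega))).mul_right
      (h m (by omega))

lemma commute_blockWord {g : ℕ → M} {z : M} {k p a : ℕ}
    (h : ∀ i, k < i → i ≤ k + p → Commute z (g i)) (hc : Commute z (colourWord g a k)) :
    Commute z (blockWord g k p a) := by
  refine Commute.mul_right ?_ (semiconjBy_ascProd fun i hi => h _ (by omega) (by omega))
  split_ifs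
  · exact Commute.one_right z
  · exact hc

lemma commute_blocksWord {g : ℕ → M} {z : M} {k : ℕ} {L : List Block}
    (h : ∀ i, k < i → i < k + totalSize L → Commute z (g i))
    (hc : ∀ a j, k ≤ j → j < k + totalSize L → Commute z (colourWord g a j)) :
    Commute z (blocksWord g k L) := by
  induction L generalizing k with
  | nil => exact Commute.one_right z
  | cons x L ih =>
    rw [totalSize_cons] at h hc
    exact (commute_blockWord (fun i hi hi' => h i hi (by omega))
      (hc _ k le_rfl (by omega))).mul_right
      (ih (fun i hi hi' => h i (by omega) (by omega))
        fun a j hj hj' => hc a j (by omega) (by omega))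

section Membership

variable {g : ℕ → M} {I : Set ℕ}

lemma letter_mem_wordsIn {i : ℕ} (h : i ∈ I) : g i ∈ wordsIn g I :=
  Submonoid.subset_closure (Set.mem_image_of_mem g h)

lemma wordsIn_mono {J : Set ℕ} (h : I ⊆ J) : wordsIn g I ≤ wordsIn g J :=
  Submonoid.closure_mono (Set.image_mono h)

lemma commute_of_mem_wordsIn {x z : M} (hx : x ∈ wordsIn g I)
    (h : ∀ i ∈ I, Commute (g i) z) : Commute x z := by
  induction hx using Submonoid.closure_induction with
  | mem _ hx => obtain ⟨i, hi, rfl⟩ := hx; exact h i hi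
  | one => exact Commute.one_left z
  | mul _ _ _ _ hx hy => exact hx.mul_left hy

lemma ascProd_mem_wordsIn {a m : ℕ} (h : Set.Ico a (a + m) ⊆ I) :
    ascProd g a m ∈ wordsIn g I := by
  induction m with
  | zero => exact one_mem _
  | succ m ih =>
    exact mul_mem (ih ((Set.Ico_subset_Ico_right (by omega)).trans h))
      (letter_mem_wordsIn (h ⟨by omega, by omega⟩))

lemma descProd_mem_wordsIn {a m : ℕ} (h : Set.Ico a (a + m) ⊆ I) :
    descProd g a m ∈ wordsIn g I := by
  induction m with
  | zero => exact one_mem _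
  | succ m ih =>
    exact mul_mem (letter_mem_wordsIn (h ⟨by omega, by omega⟩))
      (ih ((Set.Ico_subset_Ico_right (by omega)).trans h))

lemma wrap_mem_wordsIn {x : M} {b m : ℕ} (hx : x ∈ wordsIn g I) (h : Set.Ico b (b + m) ⊆ I) :
    wrap g x b m ∈ wordsIn g I := by
  rw [wrap_eq]
  exact mul_mem (mul_mem (descProd_mem_wordsIn h) hx) (ascProd_mem_wordsIn h)

lemma palindrome_mem_wordsIn {a m : ℕ} (h : Set.Icc a (a + m) ⊆ I) :
    palindrome g a m ∈ wordsIn g I :=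
  wrap_mem_wordsIn (letter_mem_wordsIn (h ⟨le_rfl, by omega⟩)) fun i hi => by
    simp only [Set.mem_Ico] at hi
    exact h ⟨by omega, by omega⟩

lemma colourWord_mem_wordsIn {a k : ℕ} (h : Set.Iic k ⊆ I) : colourWord g a k ∈ wordsIn g I :=
  wrap_mem_wordsIn (pow_mem (letter_mem_wordsIn (h (Nat.zero_le k))) a) fun i hi => by
    simp only [Set.mem_Ico] at hi
    exact h (Nat.le_of_lt_succ (by omega))

lemma blockWord_mem_wordsIn {k p a : ℕ} (h : Set.Iic (k + p) ⊆ I) :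
    blockWord g k p a ∈ wordsIn g I := by
  refine mul_mem ?_ (ascProd_mem_wordsIn fun i hi => h ?_)
  · split_ifs
    · exact one_mem _
    · exact colourWord_mem_wordsIn ((Set.Iic_subset_Iic.2 (by omega)).trans h)
  · simp only [Set.mem_Ico] at hi
    exact Nat.le_of_lt_succ (by omega)

lemma blocksWord_mem_wordsIn {k : ℕ} {L : List Block} (h : Set.Iio (k + totalSize L) ⊆ I) :
    blocksWord g k L ∈ wordsIn g I := by
  induction L generalizing k with
  | nil => exact one_mem _
  | cons x L ih =>
    rw [totalSize_cons] at h
    refine mul_mem (blockWord_mem_wordsIn fun i hi => h ?_)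
      (ih ((Set.Iio_subset_Iio (by omega)).trans h))
    simp only [Set.mem_Iic] at hi
    simp only [Set.mem_Iio]
    omega

end Membership

lemma map_ascProd (ψ : M →* N) (g : ℕ → M) (a m : ℕ) :
    ψ (ascProd g a m) = ascProd (ψ ∘ g) a m := by
  induction m with
  | zero => exact map_one ψ
  | succ m ih => rw [ascProd, map_mul, ih]; rfl

lemma map_wrap (ψ : M →* N) (g : ℕ → M) (x : M) (b m : ℕ) :
    ψ (wrap g x b m) = wrap (ψ ∘ g) (ψ x) b m := by
  induction m with
  | zero => rfl
  | succ m ih => rw [wrap, map_mul, map_mul, ih]; rfl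

lemma map_blockWord (ψ : M →* N) (g : ℕ → M) (k p a : ℕ) :
    ψ (blockWord g k p a) = blockWord (ψ ∘ g) k p a := by
  simp only [blockWord, colourWord, map_mul, map_ascProd, apply_ite ψ, map_one, map_wrap,
    map_pow, Function.comp_apply]

lemma map_blocksWord (ψ : M →* N) (g : ℕ → M) (k : ℕ) (L : List Block) :
    ψ (blocksWord g k L) = blocksWord (ψ ∘ g) k L := by
  induction L generalizing k with
  | nil => exact map_one ψ
  | cons x L ih => rw [blocksWord, map_mul, ih, map_blockWord]; rfl

end Words

/-! ### Sequences satisfying the braid relations -/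

/-- The letters `g 0 = t` and `g i = s_i` satisfy the braid relations of type `G(r, 1, n)`, except
for the one between `t` and `s_1`. -/
structure IsBraidSeq {M : Type*} [Monoid M] (g : ℕ → M) (n : ℕ) : Prop where
  commute : ∀ i j, i + 2 ≤ j → Commute (g i) (g j)
  braid : ∀ i, 1 ≤ i → i + 1 < n → g i * g (i + 1) * g i = g (i + 1) * g i * g (i + 1)

namespace IsBraidSeq

variable {M N : Type*} [Monoid M] [Monoid N] {g : ℕ → M} {n : ℕ}

lemma map (hg : IsBraidSeq g n) (ψ : M →* N) : IsBraidSeq (ψ ∘ g) n where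
  commute i j h := (hg.commute i j h).map ψ
  braid i h1 h2 := by simp only [Function.comp_apply, ← map_mul, hg.braid i h1 h2]

lemma commute_of_separated (hg : IsBraidSeq g n) {k : ℕ} {x y : M}
    (hx : x ∈ wordsIn g (Set.Iio k)) (hy : y ∈ wordsIn g (Set.Ioi k)) : Commute x y :=
  commute_of_mem_wordsIn hx fun i hi => (commute_of_mem_wordsIn hy fun j hj =>
    (hg.commute i j (by simp only [Set.mem_Iio, Set.mem_Ioi] at hi hj; omega)).symm).symm

lemma letter_commute_of_lt (hg : IsBraidSeq g n) {i k : ℕ} {x : M} (hi : k < i)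
    (hx : x ∈ wordsIn g (Set.Iio k)) : Commute (g i) x :=
  (hg.commute_of_separated hx (letter_mem_wordsIn hi)).symm

lemma letter_commute_of_gt (hg : IsBraidSeq g n) {i k : ℕ} {x : M} (hi : i < k)
    (hx : x ∈ wordsIn g (Set.Ioi k)) : Commute (g i) x :=
  hg.commute_of_separated (letter_mem_wordsIn hi) hx

lemma ascProd_semiconjBy_succ (hg : IsBraidSeq g n) {a m i : ℕ} (ha : 1 ≤ a) (hm : a + m ≤ n)
    (h1 : a ≤ i) (h2 : i + 1 < a + m) : SemiconjBy (ascProd g a m) (g i) (g (i + 1)) := by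
  induction m with
  | zero => omega
  | succ m ih =>
    rcases Nat.lt_or_ge (i + 1) (a + m) with h | h
    · exact (ih (by omega) h).mul_left (hg.commute i (a + m) (by omega)).symm
    · obtain ⟨l, rfl⟩ : ∃ l, m = l + 1 := ⟨m - 1, by omega⟩
      obtain rfl : i = a + l := by omega
      have hc : Commute (g (a + l + 1)) (ascProd g a l) :=
        hg.letter_commute_of_lt (Nat.lt_succ_self (a + l))
          (ascProd_mem_wordsIn Set.Ico_subset_Iio_self)
      calc ascProd g a l * g (a + l) * g (a + l + 1) * g (a + l)
          = ascProd g a l * (g (a + l) * g (a + l + 1) * g (a + l)) := by simp only [mul_assoc]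
        _ = (ascProd g a l * g (a + l + 1)) * (g (a + l) * g (a + l + 1)) := by
            rw [hg.braid (a + l) (by omega) (by omega)]; simp only [mul_assoc]
        _ = g (a + l + 1) * (ascProd g a l * g (a + l) * g (a + l + 1)) := by
            rw [← hc.eq]; simp only [mul_assoc]

lemma ascProd_pow_semiconjBy (hg : IsBraidSeq g n) {a m i j : ℕ} (ha : 1 ≤ a) (hm : a + m ≤ n)
    (h1 : a ≤ i) (h2 : i + j < a + m) : SemiconjBy (ascProd g a m ^ j) (g i) (g (i + j)) := by
  induction j with
  | zero => simp
  | succ j ih =>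
    rw [pow_succ']
    exact (hg.ascProd_semiconjBy_succ (i := i + j) ha hm (by omega) (by omega)).mul_left
      (ih (by omega))

lemma ascProd_semiconjBy_ascProd (hg : IsBraidSeq g n) {a m i l : ℕ} (ha : 1 ≤ a)
    (hm : a + m ≤ n) (h1 : a ≤ i) (h2 : i + l < a + m) :
    SemiconjBy (ascProd g a m) (ascProd g i l) (ascProd g (i + 1) l) :=
  semiconjBy_ascProd fun j hj => by
    rw [add_right_comm]
    exact hg.ascProd_semiconjBy_succ ha hm (by omega) (by omega)

lemma ascProd_semiconjBy_palindrome (hg : IsBraidSeq g n) {a m i l : ℕ} (ha : 1 ≤ a)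
    (hm : a + m ≤ n) (h1 : a ≤ i) (h2 : i + l + 1 < a + m) :
    SemiconjBy (ascProd g a m) (palindrome g i l) (palindrome g (i + 1) l) :=
  semiconjBy_wrap (hg.ascProd_semiconjBy_succ ha hm h1 (by omega)) fun j hj => by
    rw [add_right_comm (i + 1)]
    exact hg.ascProd_semiconjBy_succ ha hm (by omega) (by omega)

lemma ascProd_sq_semiconjBy (hg : IsBraidSeq g n) {a m : ℕ} (ha : 1 ≤ a)
    (hm : a + (m + 1) ≤ n) : SemiconjBy (ascProd g a (m + 1) ^ 2) (g (a + m)) (g a) := by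
  have hshift : SemiconjBy (ascProd g a (m + 1)) (ascProd g a m) (ascProd g (a + 1) m) :=
    hg.ascProd_semiconjBy_ascProd ha hm le_rfl (by omega)
  have hsq : ascProd g a (m + 1) ^ 2
      = ascProd g (a + 1) m * ascProd g a (m + 1) * g (a + m) := by
    rw [← hshift.eq, mul_assoc, sq]; rfl
  unfold SemiconjBy
  conv_rhs => rw [hsq, ← mul_assoc, ← mul_assoc, ← ascProd_succ', ← sq]

lemma palindrome_succ' (hg : IsBraidSeq g n) {a m : ℕ} (ha : 1 ≤ a) (hm : a + m + 1 < n) :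
    palindrome g a (m + 1) = g a * palindrome g (a + 1) m * g a := by
  induction m with
  | zero => exact (hg.braid a ha (by omega)).symm
  | succ m ih =>
    have hc : Commute (g (a + 1 + m + 1)) (g a) := (hg.commute _ _ (by omega)).symm
    rw [palindrome_succ, ih (by omega), palindrome_succ,
      show a + (m + 1) + 1 = a + 1 + m + 1 by omega]
    calc g (a + 1 + m + 1) * (g a * palindrome g (a + 1) m * g a) * g (a + 1 + m + 1)
        = (g (a + 1 + m + 1) * g a) * palindrome g (a + 1) m * (g a * g (a + 1 + m + 1)) := by
          simp only [mul_assoc]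
      _ = g a * (g (a + 1 + m + 1) * palindrome g (a + 1) m * g (a + 1 + m + 1)) * g a := by
          rw [hc.eq]; simp only [mul_assoc, hc.eq]

lemma ascProd_mul_descProd (hg : IsBraidSeq g n) {a m : ℕ} (ha : 1 ≤ a) (hm : a + m < n) :
    ascProd g a m * descProd g a (m + 1) = palindrome g a m := by
  induction m generalizing a with
  | zero => simp [ascProd, descProd, palindrome_zero]
  | succ m ih =>
    rw [ascProd_succ', descProd_succ', hg.palindrome_succ' ha (by omega),
      ← ih (by omega) (by omega)]
    simp only [mul_assoc]

lemma commute_colourWord_of_lt (hg : IsBraidSeq g n) {a k i : ℕ} (hi : k + 1 < i) :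
    Commute (g i) (colourWord g a k) :=
  hg.letter_commute_of_lt hi (colourWord_mem_wordsIn fun _ h => Nat.lt_succ_of_le h)

lemma commute_colourWord (hg : IsBraidSeq g n) {a k i : ℕ} (h1 : 1 ≤ i) (h2 : i < k)
    (hk : k < n) : Commute (g i) (colourWord g a k) := by
  obtain ⟨l, rfl⟩ : ∃ l, k = i + 1 + l := ⟨k - (i + 1), by omega⟩
  induction l with
  | zero =>
    obtain ⟨j, rfl⟩ : ∃ j, i = j + 1 := ⟨i - 1, by omega⟩
    have hb := hg.braid (j + 1) h1 (by omega)
    have hc : Commute (g (j + 1 + 1)) (colourWord g a j) := hg.commute_colourWord_of_lt (by omega)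
    simp only [add_zero, colourWord_succ]
    set x := g (j + 1)
    set y := g (j + 1 + 1)
    set z := colourWord g a j
    calc x * (y * (x * z * x) * y) = (x * y * x) * z * x * y := by simp only [mul_assoc]
      _ = y * x * (y * z) * x * y := by rw [hb]; simp only [mul_assoc]
      _ = y * x * z * (y * x * y) := by rw [hc.eq]; simp only [mul_assoc]
      _ = y * (x * z * x) * y * x := by rw [← hb]; simp only [mul_assoc]
  | succ l ih =>
    have hc : Commute (g i) (g (i + 1 + l + 1)) := hg.commute _ _ (by omega)
    rw [← add_assoc, colourWord_succ]
    exact (hc.mul_right (ih (by omega) (by omega))).mul_right hc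

lemma commute_blocksWord (hg : IsBraidSeq g n) {k i : ℕ} {L : List Block} (h1 : 1 ≤ i)
    (h2 : i < k) (hk : k + totalSize L ≤ n) : Commute (g i) (blocksWord g k L) :=
  CyclotomicCocenter.commute_blocksWord (fun _ hj _ => hg.commute _ _ (by omega))
    fun _ _ hj hj' => hg.commute_colourWord h1 (by omega) (by omega)

/-- A power of the long cycle `s_a ⋯ s_{a + p + q}` exchanges two adjacent cycles filling the same
points: the letters of the first one are shifted up, while those of the second one are shifted up
to the last letter, wrap around, and are shifted up again. -/
lemma ascProd_pow_semiconjBy_cycles (hg : IsBraidSeq g n) {a p q : ℕ} (ha : 1 ≤ a)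
    (hm : a + (p + q + 1) ≤ n) :
    SemiconjBy (ascProd g a (p + q + 1) ^ (q + 1)) (ascProd g a p * ascProd g (a + p + 1) q)
      (ascProd g a q * ascProd g (a + q + 1) p) := by
  have hfirst : SemiconjBy (ascProd g a (p + q + 1) ^ (q + 1)) (ascProd g a p)
      (ascProd g (a + q + 1) p) := semiconjBy_ascProd fun i hi => by
    rw [show a + q + 1 + i = a + i + (q + 1) by omega]
    exact hg.ascProd_pow_semiconjBy ha hm (by omega) (by omega)
  have hsecond : SemiconjBy (ascProd g a (p + q + 1) ^ (q + 1)) (ascProd g (a + p + 1) q)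
      (ascProd g a q) := semiconjBy_ascProd fun i hi => by
    have hup := hg.ascProd_pow_semiconjBy (i := a + p + 1 + i) (j := q - 1 - i) ha hm
      (by omega) (by omega)
    have hwrap := hg.ascProd_sq_semiconjBy (m := p + q) ha hm
    have hup' := hg.ascProd_pow_semiconjBy (i := a) (j := i) ha hm (by omega) (by omega)
    rw [show a + p + 1 + i + (q - 1 - i) = a + (p + q) by omega] at hup
    have h := hup'.mul_left (hwrap.mul_left hup)
    rwa [← pow_add, ← pow_add, show i + (2 + (q - 1 - i)) = q + 1 by omega] at h
  have hc : Commute (ascProd g a q) (ascProd g (a + q + 1) p) :=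
    hg.commute_of_separated (k := a + q) (ascProd_mem_wordsIn fun i hi => hi.2)
      (ascProd_mem_wordsIn fun i hi => hi.1)
  rw [hc.eq]
  exact hfirst.mul_right hsecond

lemma ascProd_mul_colourWord_mul_ascProd (hg : IsBraidSeq g n) {k p q b : ℕ}
    (hn : k + p + 1 < n) :
    ascProd g (k + 1) p * (colourWord g b (k + p + 1) * ascProd g (k + p + 1 + 1) q)
      = palindrome g (k + 1) p * colourWord g b k * ascProd g (k + 1) (p + q + 1) := by
  have hwrap : colourWord g b (k + p + 1)
      = descProd g (k + 1) (p + 1) * colourWord g b k * ascProd g (k + 1) (p + 1) := by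
    rw [colourWord, add_assoc, wrap_add, wrap_eq, add_comm 1 k, colourWord]
  rw [hwrap, ← hg.ascProd_mul_descProd (by omega) (by omega), add_right_comm p q 1,
    ascProd_add g (k + 1) (p + 1), show k + 1 + (p + 1) = k + p + 1 + 1 by omega]
  simp only [mul_assoc]

lemma ascProd_mul_mul_descProd (hg : IsBraidSeq g n) {a m u l : ℕ} (ha : 1 ≤ a)
    (hm : a + m < n) (hu : a ≤ u) (hl : u + l + 1 ≤ a + m) :
    ascProd g (u + 1) (l + 1) * ascProd g a (m + 1) * descProd g (u + 1) (l + 1)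
      = g (u + 1) * (ascProd g a (m + 1) * palindrome g (u + 1) l) := by
  have hasc := hg.ascProd_semiconjBy_ascProd (m := m + 1) (i := u) (l := l + 1) ha
    (by omega) hu (by omega)
  have hletter := hg.ascProd_semiconjBy_succ (m := m + 1) (i := u) ha (by omega) hu (by omega)
  rw [← hasc.eq, ascProd_succ' g u, mul_assoc, mul_assoc,
    hg.ascProd_mul_descProd (by omega) (by omega), ← mul_assoc, hletter.eq, mul_assoc]

end IsBraidSeq

section InsertionSort

variable {α : Type*} {s : α → α → Prop} [DecidableRel s] {P : List α → Prop}

lemma of_orderedInsert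
    (hswap : ∀ pre x y suf, ¬ s x y → P (pre ++ y :: x :: suf) → P (pre ++ x :: y :: suf))
    {pre L : List α} {x : α} (h : P (pre ++ L.orderedInsert s x)) : P (pre ++ x :: L) := by
  induction L generalizing pre with
  | nil => exact h
  | cons y L ih =>
    by_cases hxy : s x y
    · rwa [List.orderedInsert_cons_of_le s L hxy] at h
    · rw [List.orderedInsert_of_not_le s L hxy] at h
      have hpre := ih (pre := pre ++ [y]) (by rwa [List.append_assoc])
      exact hswap _ _ _ _ hxy (by rwa [List.append_assoc] at hpre)

/-- A property of lists which can be pulled back along exchanges of adjacent entries in the wrong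
order can be pulled back along sorting. -/
lemma of_insertionSort
    (hswap : ∀ pre x y suf, ¬ s x y → P (pre ++ y :: x :: suf) → P (pre ++ x :: y :: suf))
    {pre L : List α} (h : P (pre ++ L.insertionSort s)) : P (pre ++ L) := by
  induction L generalizing pre with
  | nil => exact h
  | cons x L ih =>
    have hpre := ih (pre := pre ++ [x]) (by
      rw [List.append_assoc]
      exact of_orderedInsert hswap h)
    rwa [List.append_assoc] at hpre

end InsertionSort

/-- The order in which blocks are arranged: coloured blocks come before uncoloured ones, then
blocks are ordered by size, and then by colour. -/
def sortKey (x : Block) : ℕ ×ₗ ℕ ×ₗ ℕ := toLex (if x.2 = 0 then 1 else 0, toLex x)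

lemma sortKey_injective : Function.Injective sortKey := fun _ _ h =>
  toLex.injective (congrArg (fun z => (ofLex z).2) h)

lemma eq_of_perm_of_sorted {L L' : List Block} (h : L.Perm L')
    (hL : L.Pairwise fun x y => sortKey x ≤ sortKey y)
    (hL' : L'.Pairwise fun x y => sortKey x ≤ sortKey y) : L = L' :=
  List.Perm.eq_of_pairwise (fun _ _ _ _ hle hge => sortKey_injective (le_antisymm hle hge)) hL hL' h

/-! ### Reduction to sorted products of blocks -/

/-- The setting in which words are reduced to products of blocks. The letters `g 0 = t` and
`g i = s_i` satisfy the braid relations in `B`, and `φ` maps to a quotient `N` in which, moreover,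
`t` commutes with `s_1 t^a s_1`. In the application `N` consists of words up to words of smaller
length, `E x y` says that `x` and `y` have the same length and conjugate images in `W_n` and that
`T_x ≡ T_y` in the cocenter up to shorter words, while `D x` says that the conjugacy class of `x`
contains a shorter element and that `T_x` vanishes in the cocenter up to shorter words. -/
structure CocenterModel (B N : Type*) [Monoid B] [Monoid N] (r n : ℕ) where
  /-- the letters -/
  g : ℕ → B
  /-- the quotient map -/
  φ : B →* N
  /-- equivalence in the cocenter up to shorter words -/
  E : N → N → Prop
  /-- reducibility to shorter words in the cocenter -/
  D : N → Prop
  isBraidSeq : IsBraidSeq g n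
  equivalence : Equivalence E
  E_mul_comm : ∀ x y, E (x * y) (y * x)
  E_of_semiconjBy : ∀ z x y, z ∈ wordsIn g (Set.Ioo 0 n) → SemiconjBy z x y → E (φ x) (φ y)
  commute_zero : 1 < n → ∀ a, Commute (φ (g 0)) (φ (g 1) * φ (g 0) ^ a * φ (g 1))
  D_of_E : ∀ {x y}, E x y → D y → D x
  D_sq : ∀ i, 1 ≤ i → i < n → ∀ u v, D (u * (φ (g i) * φ (g i)) * v)
  D_pow : ∀ u v, D (u * φ (g 0) ^ r * v)

namespace CocenterModel

variable {B N : Type*} [Monoid B] [Monoid N] {r n : ℕ} (c : CocenterModel B N r n)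

/-- The images of the letters in the quotient. -/
def letter : ℕ → N := c.φ ∘ c.g

/-- Reducibility inside every larger word. -/
def Null (x : N) : Prop := ∀ u v, c.D (u * x * v)

/-- A coarse normal form of the words in the letters with index at most `j`: such a word is
reducible, does not need the letter `s_j`, contains `s_j` once, or ends in
`s_j ⋯ s_1 t^a s_1 ⋯ s_j`. -/
inductive CosetForm (j : ℕ) : N → Prop
  | null {x : N} (hx : c.Null x) : CosetForm j x
  | low {x : N} (hx : x ∈ wordsIn c.letter (Set.Iio j)) : CosetForm j x
  | letter {w w' : N} (hj : 1 ≤ j) (hw : w ∈ wordsIn c.letter (Set.Iio j))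
      (hw' : w' ∈ wordsIn c.letter (Set.Iio j)) : CosetForm j (w * c.letter j * w')
  | coloured {w : N} {a : ℕ} (ha : a ≠ 0) (har : a < r)
      (hw : w ∈ wordsIn c.letter (Set.Iio j)) : CosetForm j (w * colourWord c.letter a j)

/-- The factors `x` and `y` of a word `x * z * y` whose middle factor `z` lives on the points
`k, …, m - 1`: the first one lives on smaller points, and the second one commutes with all letters
on the points up to `m - 1`. -/
structure Flanks (k m : ℕ) (x y : N) : Prop where
  left : x ∈ wordsIn c.letter (Set.Iio k)
  right : ∀ i < m, Commute (c.letter i) y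
  le : m ≤ n

variable {c}

lemma isBraidSeq_letter : IsBraidSeq c.letter n := c.isBraidSeq.map c.φ

lemma Null.mul {x : N} (h : c.Null x) (u v : N) : c.Null (u * x * v) := fun u' v' => by
  simpa only [mul_assoc] using h (u' * u) (v * v')

lemma Null.mul_left {x : N} (h : c.Null x) (u : N) : c.Null (u * x) := by
  simpa only [mul_one] using h.mul u 1

lemma Null.mul_right {x : N} (h : c.Null x) (v : N) : c.Null (x * v) := by
  simpa only [one_mul] using h.mul 1 v

lemma Null.reducible {x : N} (h : c.Null x) : c.D x := by
  simpa only [one_mul, mul_one] using h 1 1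

lemma null_sq {i : ℕ} (h1 : 1 ≤ i) (h2 : i < n) : c.Null (c.letter i * c.letter i) :=
  c.D_sq i h1 h2

lemma E_of_eq {x y : N} (h : x = y) : c.E x y := h ▸ c.equivalence.refl x

lemma E_rotate {x y z w : N} (hx : Commute z x) (hy : Commute z y) :
    c.E (x * (z * w) * y) (x * (w * z) * y) := by
  have h := c.E_mul_comm z (x * w * y)
  rwa [show z * (x * w * y) = x * (z * w) * y by simp only [← mul_assoc]; rw [hx.eq],
    show x * w * y * z = x * (w * z) * y by simp only [mul_assoc]; rw [hy.eq]] at h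

lemma letter_commute_colourWord {a k i : ℕ} (hi : i < k) (hk : k < n) :
    Commute (c.letter i) (colourWord c.letter a k) := by
  rcases Nat.eq_zero_or_pos i with rfl | hi'
  · obtain ⟨l, rfl⟩ : ∃ l, k = l + 1 := ⟨k - 1, by omega⟩
    induction l with
    | zero => exact c.commute_zero hk a
    | succ l ih =>
      have hc : Commute (c.letter 0) (c.letter (l + 1 + 1)) :=
        isBraidSeq_letter.commute _ _ (by omega)
      rw [colourWord_succ]
      exact (hc.mul_right (ih (by omega) (by omega))).mul_right hc
  · exact isBraidSeq_letter.commute_colourWord hi' hi hk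

lemma letter_commute_blockWord {a k p i : ℕ} (hi : i < k) (hk : k < n) :
    Commute (c.letter i) (blockWord c.letter k p a) :=
  commute_blockWord (fun _ _ _ => isBraidSeq_letter.commute _ _ (by omega))
    (letter_commute_colourWord hi hk)

lemma letter_commute_blocksWord {k i : ℕ} {L : List Block} (hi : i < k)
    (hk : k + totalSize L ≤ n) : Commute (c.letter i) (blocksWord c.letter k L) :=
  commute_blocksWord (fun _ _ _ => isBraidSeq_letter.commute _ _ (by omega))
    fun _ _ _ _ => letter_commute_colourWord (by omega) (by omega)

namespace CosetForm

lemma of_mem_zero {x : N} (hx : x ∈ wordsIn c.letter (Set.Iio 1)) : c.CosetForm 0 x := by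
  have hone : Set.Iio 1 = ({0} : Set ℕ) := by ext; simp
  rw [wordsIn, hone, Set.image_singleton, Submonoid.mem_closure_singleton] at hx
  obtain ⟨a, rfl⟩ := hx
  by_cases ha : a = 0
  · exact low (by simpa only [ha, pow_zero] using one_mem _)
  rcases Nat.lt_or_ge a r with har | har
  · simpa only [one_mul, colourWord, wrap] using coloured ha har (one_mem _) (c := c) (j := 0)
  · obtain ⟨b, rfl⟩ := Nat.exists_eq_add_of_le har
    rw [pow_add]
    exact null ((show c.Null (c.letter 0 ^ r) from c.D_pow).mul_right _)

lemma mul_letter_of_lt {i j : ℕ} {x : N} (hi : i < j) (hj : j < n) (hx : c.CosetForm j x) :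
    c.CosetForm j (x * c.letter i) := by
  have hi' : c.letter i ∈ wordsIn c.letter (Set.Iio j) := letter_mem_wordsIn hi
  cases hx with
  | null hx => exact null (hx.mul_right _)
  | low hx => exact low (mul_mem hx hi')
  | letter h1 hw hw' => rw [mul_assoc]; exact letter h1 hw (mul_mem hw' hi')
  | coloured ha har hw =>
    rw [mul_assoc, ← (letter_commute_colourWord hi hj).eq, ← mul_assoc]
    exact coloured ha har (mul_mem hw hi')

lemma letter_mul_letter {j : ℕ} (hj : j + 1 < n) {w v : N}
    (hw : w ∈ wordsIn c.letter (Set.Iio (j + 1))) (hv : c.CosetForm j v) :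
    c.CosetForm (j + 1) (w * c.letter (j + 1) * v * c.letter (j + 1)) := by
  have hmono : wordsIn c.letter (Set.Iio j) ≤ wordsIn c.letter (Set.Iio (j + 1)) :=
    wordsIn_mono (Set.Iio_subset_Iio (Nat.le_succ j))
  have hj' : c.letter j ∈ wordsIn c.letter (Set.Iio (j + 1)) :=
    letter_mem_wordsIn (Nat.lt_succ_self j)
  have hcomm : ∀ v ∈ wordsIn c.letter (Set.Iio j), Commute (c.letter (j + 1)) v := fun v hv =>
    isBraidSeq_letter.letter_commute_of_lt (Nat.lt_succ_self j) hv
  cases hv with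
  | null hv => exact null ((hv.mul_left _).mul_right _)
  | low hv =>
    have h := (null_sq (c := c) (Nat.le_add_left 1 j) hj).mul w v
    refine null ?_
    rwa [mul_assoc (w * _), ← (hcomm v hv).eq, ← mul_assoc, mul_assoc w]
  | @letter v v' h1 hv hv' =>
    have e : w * c.letter (j + 1) * (v * c.letter j * v') * c.letter (j + 1)
        = w * v * c.letter j * c.letter (j + 1) * (c.letter j * v') := by
      calc _ = w * (c.letter (j + 1) * v) * c.letter j * (v' * c.letter (j + 1)) := by
            simp only [mul_assoc]
        _ = w * v * (c.letter (j + 1) * c.letter j * c.letter (j + 1)) * v' := by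
            rw [(hcomm v hv).eq, ← (hcomm v' hv').eq]; simp only [mul_assoc]
        _ = _ := by rw [← isBraidSeq_letter.braid j h1 hj]; simp only [mul_assoc]
    rw [e]
    exact letter (Nat.le_add_left 1 j) (mul_mem (mul_mem hw (hmono hv)) hj')
      (mul_mem hj' (hmono hv'))
  | @coloured v a ha har hv =>
    have e : w * c.letter (j + 1) * (v * colourWord c.letter a j) * c.letter (j + 1)
        = w * v * colourWord c.letter a (j + 1) := by
      rw [← mul_assoc _ v, mul_assoc w, (hcomm v hv).eq, colourWord_succ]
      simp only [mul_assoc]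
    rw [e]
    exact coloured ha har (mul_mem hw (hmono hv))

lemma mul_letter_self {j : ℕ} (hj : j + 1 < n)
    (ih : ∀ v ∈ wordsIn c.letter (Set.Iio (j + 1)), c.CosetForm j v) {x : N}
    (hx : c.CosetForm (j + 1) x) : c.CosetForm (j + 1) (x * c.letter (j + 1)) := by
  cases hx with
  | null hx => exact null (hx.mul_right _)
  | low hx => simpa only [mul_one] using letter (Nat.le_add_left 1 j) hx (one_mem _)
  | letter _ hw hw' => exact letter_mul_letter hj hw (ih _ hw')
  | @coloured w a _ _ _ =>
    have h := (null_sq (c := c) (Nat.le_add_left 1 j) hj).mul_left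
      (w * (c.letter (j + 1) * colourWord c.letter a j))
    exact null (by simpa only [mul_assoc, colourWord_succ] using h)

lemma of_mem {j : ℕ} (hj : j < n) {x : N} (hx : x ∈ wordsIn c.letter (Set.Iio (j + 1))) :
    c.CosetForm j x := by
  induction j generalizing x with
  | zero => exact of_mem_zero hx
  | succ j ih =>
    induction hx using Submonoid.closure_induction_right with
    | one => exact low (one_mem _)
    | mul_right x _ y hy hx =>
      obtain ⟨i, hi, rfl⟩ := hy
      rcases Nat.lt_succ_iff_lt_or_eq.mp hi with h | rfl
      · exact mul_letter_of_lt h hj hx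
      · exact mul_letter_self hj (fun v hv => ih (by omega) hv) hx

end CosetForm

/-- Splitting off the block through the last point. The word `s_{k+1} ⋯ s_{k+d}` is the part of its
cycle that has been found so far, and a factor in between is carried around the word. -/
lemma exists_last_block [NeZero r] {k d : ℕ} (hm : k + 1 + d ≤ n) {x y : N}
    (hx : x ∈ wordsIn c.letter (Set.Iio (k + 1)))
    (hy : ∀ i < k + 1 + d, Commute (c.letter i) y) :
    c.D (x * ascProd c.letter (k + 1) d * y) ∨
      ∃ l p a, l + p + 1 = k + 1 + d ∧ a < r ∧ ∃ w ∈ wordsIn c.letter (Set.Iio l),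
        c.E (x * ascProd c.letter (k + 1) d * y) (w * (blockWord c.letter l p a * y)) := by
  induction k using Nat.strong_induction_on generalizing x d with
  | _ k ih =>
  cases CosetForm.of_mem (by omega) hx with
  | null hx => exact Or.inl ((hx.mul_right _).mul_right _).reducible
  | low hw =>
    refine Or.inr ⟨k, d, 0, by omega, NeZero.pos r, x, hw, E_of_eq ?_⟩
    rw [blockWord_zero, mul_assoc]
  | @coloured w a ha har hw =>
    refine Or.inr ⟨k, d, a, by omega, har, w, hw, E_of_eq ?_⟩
    simp only [blockWord_of_ne_zero _ _ _ ha, mul_assoc]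
  | @letter w w' hk hw hw' =>
    obtain ⟨k, rfl⟩ : ∃ j, k = j + 1 := ⟨k - 1, by omega⟩
    have hasc : Commute w' (ascProd c.letter (k + 1 + 1) d) :=
      isBraidSeq_letter.commute_of_separated hw' (ascProd_mem_wordsIn fun i hi => hi.1)
    have hwy : Commute w' y := commute_of_mem_wordsIn hw' fun i hi =>
      hy i ((Set.mem_Iio.1 hi).trans_le (by omega))
    have hE : c.E (w * c.letter (k + 1) * w' * ascProd c.letter (k + 1 + 1) d * y)
        (w' * w * ascProd c.letter (k + 1) (d + 1) * y) := by
      have h := c.E_mul_comm (w * ascProd c.letter (k + 1) (d + 1) * y) w'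
      convert h using 1
      · rw [mul_assoc _ w', hasc.eq, mul_assoc _ _ y, mul_assoc _ w', hwy.eq, ascProd_succ']
        simp only [mul_assoc]
      · simp only [mul_assoc]
    have h := ih k (Nat.lt_succ_self k) (d := d + 1) (by omega) (mul_mem hw' hw)
      fun i hi => hy i (by omega)
    rw [show k + 1 + (d + 1) = k + 1 + 1 + d by omega] at h
    exact h.imp (c.D_of_E hE) fun ⟨l, p, a, hl, ha, v, hv, hE'⟩ =>
      ⟨l, p, a, hl, ha, v, hv, c.equivalence.trans hE hE'⟩

/-- The factor `y` consists of the blocks that have already been split off. -/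
lemma exists_blocks [NeZero r] {m : ℕ} (hm : m ≤ n) {x y : N}
    (hx : x ∈ wordsIn c.letter (Set.Iio m)) (hy : ∀ i < m, Commute (c.letter i) y) :
    c.D (x * y) ∨ ∃ L : List Block, (∀ b ∈ L, b.2 < r) ∧ totalSize L = m ∧
      c.E (x * y) (blocksWord c.letter 0 L * y) := by
  induction m using Nat.strong_induction_on generalizing x y with
  | _ m ih =>
  rcases m with _ | k
  · have hx1 : x = 1 := by simpa [wordsIn] using hx
    exact Or.inr ⟨[], by simp, rfl, E_of_eq (by rw [hx1, blocksWord])⟩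
  have hlast := exists_last_block (d := 0) hm hx hy
  simp only [ascProd, mul_one] at hlast
  rcases hlast with hD | ⟨l, p, a, hl, ha, w, hw, hE⟩
  · exact Or.inl hD
  have hy' : ∀ i < l, Commute (c.letter i) (blockWord c.letter l p a * y) := fun i hi =>
    (letter_commute_blockWord hi (by omega)).mul_right (hy i (by omega))
  rcases ih l (by omega) (by omega) hw hy' with hD | ⟨L, hL, rfl, hE'⟩
  · exact Or.inl (c.D_of_E hE hD)
  refine Or.inr ⟨L ++ [(p, a)], ?_, ?_, ?_⟩
  · simpa [or_imp, forall_and] using ⟨fun p a h => hL (p, a) h, ha⟩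
  · rw [totalSize_append, totalSize_cons, ← add_assoc, ← add_assoc, hl]; rfl
  · simpa only [blocksWord_append, blocksWord, zero_add, mul_one, mul_assoc] using
      c.equivalence.trans hE hE'

lemma E_swap_cycles {k p q : ℕ} {x y : B} (hn : k + p + q + 2 ≤ n)
    (hx : ∀ i, k < i → i < k + p + q + 2 → Commute (c.g i) x)
    (hy : ∀ i, k < i → i < k + p + q + 2 → Commute (c.g i) y) :
    c.E (c.φ (x * (ascProd c.g (k + 1) p * ascProd c.g (k + p + 1 + 1) q) * y))
      (c.φ (x * (ascProd c.g (k + 1) q * ascProd c.g (k + q + 1 + 1) p) * y)) := by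
  have hz : ascProd c.g (k + 1) (p + q + 1) ^ (q + 1)
      ∈ wordsIn c.g (Set.Ico (k + 1) (k + p + q + 2)) :=
    pow_mem (ascProd_mem_wordsIn (Set.Ico_subset_Ico_right (by omega))) _
  have hswap := c.isBraidSeq.ascProd_pow_semiconjBy_cycles (a := k + 1) (p := p) (q := q)
    (by omega) (by omega)
  rw [add_right_comm k 1 p, add_right_comm k 1 q] at hswap
  refine c.E_of_semiconjBy _ _ _ (wordsIn_mono ?_ hz) ((SemiconjBy.mul_right
    (commute_of_mem_wordsIn hz fun i hi => hx i hi.1 hi.2) hswap).mul_right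
    (commute_of_mem_wordsIn hz fun i hi => hy i hi.1 hi.2))
  exact fun i hi => ⟨k.succ_pos.trans_le hi.1, hi.2.trans_le hn⟩

namespace Flanks

variable {k m : ℕ} {x y : N}

lemma commute_left (h : c.Flanks k m x y) {z : N}
    (hz : z ∈ wordsIn c.letter (Set.Ioo k m)) : Commute z x :=
  (isBraidSeq_letter.commute_of_separated h.left
    (wordsIn_mono Set.Ioo_subset_Ioi_self hz)).symm

lemma commute_right (h : c.Flanks k m x y) {z : N}
    (hz : z ∈ wordsIn c.letter (Set.Iio m)) : Commute z y :=
  commute_of_mem_wordsIn hz h.right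

lemma E_rotate (h : c.Flanks k m x y) {z w : N} (hz : z ∈ wordsIn c.letter (Set.Ioo k m)) :
    c.E (x * (z * w) * y) (x * (w * z) * y) :=
  CocenterModel.E_rotate (h.commute_left hz)
    (h.commute_right (wordsIn_mono Set.Ioo_subset_Iio_self hz))

end Flanks

lemma null_ascProd_mul_palindrome {a m i l : ℕ} (hm : a + m < n) (hi : 1 ≤ i)
    (hl : i + l = a + m) : c.Null (ascProd c.letter a (m + 1) * palindrome c.letter i l) := by
  obtain ⟨v, hv⟩ : ∃ v, palindrome c.letter i l = c.letter (a + m) * v := by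
    rw [← hl]
    cases l with
    | zero => exact ⟨1, (mul_one _).symm⟩
    | succ l => exact ⟨_, by rw [palindrome_succ, mul_assoc]; rfl⟩
  rw [hv, ascProd, mul_assoc, ← mul_assoc (c.letter _)]
  exact ((null_sq (by omega) hm).mul_right v).mul_left _

section TwoBlocks

variable {k p q : ℕ} {x y : N}

/-- Conjugation shifts the palindrome up until it meets the end of the ascending product. -/
lemma D_ascProd_palindrome {b m l d i : ℕ} (h : c.Flanks k (k + m + 2) x y)
    (hi : i + l + d = m) :
    c.D (x * (ascProd c.letter (k + 1) (m + 1) * palindrome c.letter (k + 1 + i) l *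
      colourWord c.letter b k) * y) := by
  have hn := h.le
  induction d generalizing i with
  | zero =>
    exact (((null_ascProd_mul_palindrome (by omega) (by omega) (by omega)).mul_right _).mul
      x y).reducible
  | succ d ih =>
    have hmem : palindrome c.letter (k + 1 + i + 1) l
        ∈ wordsIn c.letter (Set.Ioo (k + 1) (k + m + 2)) :=
      palindrome_mem_wordsIn fun j hj => by
        simp only [Set.mem_Icc] at hj
        exact ⟨by omega, by omega⟩
    have hshift := (isBraidSeq_letter (c := c)).ascProd_semiconjBy_palindrome
      (a := k + 1) (m := m + 1) (i := k + 1 + i) (l := l)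
      (by omega) (by omega) (by omega) (by omega)
    have hcolour : Commute (palindrome c.letter (k + 1 + i + 1) l) (colourWord c.letter b k) :=
      commute_of_mem_wordsIn hmem fun j hj => isBraidSeq_letter.commute_colourWord_of_lt hj.1
    have hbefore : ascProd c.letter (k + 1) (m + 1) * palindrome c.letter (k + 1 + i) l *
          colourWord c.letter b k
        = palindrome c.letter (k + 1 + i + 1) l *
          (ascProd c.letter (k + 1) (m + 1) * colourWord c.letter b k) := by
      rw [hshift.eq, mul_assoc]
    have hafter : ascProd c.letter (k + 1) (m + 1) * colourWord c.letter b k *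
          palindrome c.letter (k + 1 + i + 1) l
        = ascProd c.letter (k + 1) (m + 1) * palindrome c.letter (k + 1 + (i + 1)) l *
          colourWord c.letter b k := by
      rw [mul_assoc, ← hcolour.eq, ← mul_assoc]; rfl
    rw [hbefore]
    refine c.D_of_E (h.E_rotate (wordsIn_mono (Set.Ioo_subset_Ioo_left (Nat.le_succ k)) hmem)) ?_
    rw [hafter]
    exact ih (by omega)

lemma D_zero_colour {b : ℕ} (hb : b ≠ 0) (h : c.Flanks k (k + p + q + 2) x y) :
    c.D (x * (blockWord c.letter k p 0 * blockWord c.letter (k + p + 1) q b) * y) := by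
  have hn := h.le
  rw [blockWord_zero, blockWord_of_ne_zero _ _ _ hb,
    isBraidSeq_letter.ascProd_mul_colourWord_mul_ascProd (by omega)]
  have hD := D_ascProd_palindrome (b := b) (m := p + q) (l := p) (d := q) (i := 0)
    (add_assoc k p q ▸ h) (by omega)
  have hmem : ascProd c.letter (k + 1) (p + q + 1)
      ∈ wordsIn c.letter (Set.Ioo k (k + p + q + 2)) :=
    ascProd_mem_wordsIn fun i hi => ⟨hi.1, hi.2.trans_le (by omega)⟩
  rw [mul_assoc (ascProd _ _ _)] at hD
  exact c.D_of_E (c.equivalence.symm (h.E_rotate hmem)) hD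

end TwoBlocks

section Unroll

variable {k m u l a b : ℕ} {x y w : N}

/-- The descending half of the palindrome is carried around the word, where it cancels against the
ascending half. -/
lemma E_unroll_once (h : c.Flanks k (k + m + 2) x y) (hw : w ∈ wordsIn c.letter (Set.Iio u))
    (hu : k + 1 ≤ u) (hl : u + (l + 1) ≤ k + 1 + m) :
    c.E (x * (w * palindrome c.letter u (l + 1) * colourWord c.letter b k *
        ascProd c.letter (k + 1) (m + 1)) * y)
      (x * (w * c.letter u * c.letter (u + 1) * colourWord c.letter b k *
        (ascProd c.letter (k + 1) (m + 1) * palindrome c.letter (u + 1) l)) * y) := by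
  have hn := h.le
  set C := ascProd c.letter (k + 1) (m + 1)
  set β := colourWord c.letter b k
  set down := descProd c.letter (u + 1) (l + 1) with hdown
  set up := ascProd c.letter (u + 1) (l + 1)
  have hup : Commute up β := commute_of_mem_wordsIn
    (ascProd_mem_wordsIn (I := Set.Ioi (k + 1)) fun i hi => hu.trans_lt hi.1)
    fun i hi => isBraidSeq_letter.commute_colourWord_of_lt hi
  have hletter : Commute (c.letter (u + 1)) β :=
    isBraidSeq_letter.commute_colourWord_of_lt (Nat.lt_succ_of_le hu)
  have hdownw : Commute w down := isBraidSeq_letter.commute_of_separated hw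
    (descProd_mem_wordsIn fun i hi => hi.1)
  have hmem : down ∈ wordsIn c.letter (Set.Ioo k (k + m + 2)) :=
    descProd_mem_wordsIn fun i hi => by
      simp only [Set.mem_Ico] at hi
      exact ⟨by omega, by omega⟩
  have hmerge : up * C * down = c.letter (u + 1) * (C * palindrome c.letter (u + 1) l) :=
    isBraidSeq_letter.ascProd_mul_mul_descProd (by omega) (by omega) hu (by omega)
  have hbefore : w * palindrome c.letter u (l + 1) * β * C
      = down * (w * c.letter u * up * β * C) := by
    rw [palindrome, wrap_eq, ← hdown]
    simp only [← mul_assoc, hdownw.eq]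
    rfl
  have hafter : w * c.letter u * up * β * C * down
      = w * c.letter u * c.letter (u + 1) * β * (C * palindrome c.letter (u + 1) l) := by
    rw [mul_assoc _ up, hup.eq, mul_assoc _ (c.letter (u + 1)), hletter.eq]
    simp only [mul_assoc] at hmerge ⊢
    rw [hmerge]
  rw [hbefore, ← hafter]
  exact h.E_rotate hmem

/-- The palindrome in the middle is unrolled two letters at a time, until it is exhausted or meets
the end of the last factor. -/
lemma unroll (h : c.Flanks k (k + m + 2) x y) (hw : w ∈ wordsIn c.letter (Set.Iio u))
    (hu : k + 1 ≤ u) (hl : u + l ≤ k + 1 + m) :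
    k + 1 + m < u + 2 * l ∧ c.D (x * (w * palindrome c.letter u l * colourWord c.letter b k *
        ascProd c.letter (k + 1) (m + 1)) * y) ∨
      u + 2 * l ≤ k + 1 + m ∧ c.E (x * (w * palindrome c.letter u l * colourWord c.letter b k *
          ascProd c.letter (k + 1) (m + 1)) * y)
        (x * (w * ascProd c.letter u (2 * l + 1) * colourWord c.letter b k *
          ascProd c.letter (k + 1) (m + 1)) * y) := by
  have hn := h.le
  induction l generalizing u w with
  | zero =>
    refine Or.inr ⟨by omega, E_of_eq ?_⟩
    simp only [palindrome_zero, ascProd, add_zero, one_mul]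
  | succ l ih =>
    have hE := E_unroll_once (b := b) h hw hu hl
    rcases hl.eq_or_lt with hlast | hlt
    · have hnull : c.Null (ascProd c.letter (k + 1) (m + 1) * palindrome c.letter (u + 1) l) :=
        null_ascProd_mul_palindrome (by omega) (by omega) (by omega)
      exact Or.inl ⟨by omega, c.D_of_E hE ((hnull.mul_left _).mul _ _).reducible⟩
    have hshift : SemiconjBy (ascProd c.letter (k + 1) (m + 1)) (palindrome c.letter (u + 1) l)
        (palindrome c.letter (u + 2) l) :=
      isBraidSeq_letter.ascProd_semiconjBy_palindrome (by omega) (by omega) (by omega) (by omega)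
    have hcolour : Commute (palindrome c.letter (u + 2) l) (colourWord c.letter b k) :=
      commute_of_mem_wordsIn (palindrome_mem_wordsIn (I := Set.Ioi (k + 1)) fun i hi =>
        (show k + 1 < u + 2 by omega).trans_le hi.1)
        fun i hi => isBraidSeq_letter.commute_colourWord_of_lt hi
    have hword : w * c.letter u * c.letter (u + 1) * colourWord c.letter b k *
          (ascProd c.letter (k + 1) (m + 1) * palindrome c.letter (u + 1) l)
        = w * c.letter u * c.letter (u + 1) * palindrome c.letter (u + 2) l *
          colourWord c.letter b k * ascProd c.letter (k + 1) (m + 1) := by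
      rw [hshift.eq, ← mul_assoc, mul_assoc _ (colourWord _ _ _), ← hcolour.eq, ← mul_assoc]
    rw [hword] at hE
    have hw' : w * c.letter u * c.letter (u + 1) ∈ wordsIn c.letter (Set.Iio (u + 2)) :=
      mul_mem (mul_mem (wordsIn_mono (Set.Iio_subset_Iio (by omega)) hw)
        (letter_mem_wordsIn (show u < u + 2 by omega)))
        (letter_mem_wordsIn (show u + 1 < u + 2 by omega))
    have hlong : w * c.letter u * c.letter (u + 1) * ascProd c.letter (u + 2) (2 * l + 1)
        = w * ascProd c.letter u (2 * (l + 1) + 1) := by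
      rw [show 2 * (l + 1) + 1 = 2 * l + 1 + 1 + 1 by omega, ascProd_succ' _ u,
        ascProd_succ' _ (u + 1)]
      simp only [mul_assoc]
    rcases ih hw' (by omega) (by omega) with ⟨hlt', hD⟩ | ⟨hle, hE'⟩
    · exact Or.inl ⟨by omega, c.D_of_E hE hD⟩
    · rw [hlong] at hE'
      exact Or.inr ⟨by omega, c.equivalence.trans hE hE'⟩

end Unroll

section TwoColouredBlocks

variable {k p q a b : ℕ} {x y : N}

lemma unroll_colours (ha : a ≠ 0) (hb : b ≠ 0) (h : c.Flanks k (k + p + q + 2) x y) :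
    q < p ∧ c.D (x * (blockWord c.letter k p a * blockWord c.letter (k + p + 1) q b) * y) ∨
    p ≤ q ∧ c.E (x * (blockWord c.letter k p a * blockWord c.letter (k + p + 1) q b) * y)
      (x * (colourWord c.letter a k * ascProd c.letter (k + 1) (2 * p + 1) *
        colourWord c.letter b k * ascProd c.letter (k + 1) (p + q + 1)) * y) := by
  have hn := h.le
  have hword : blockWord c.letter k p a * blockWord c.letter (k + p + 1) q b
      = colourWord c.letter a k * palindrome c.letter (k + 1) p * colourWord c.letter b k *
        ascProd c.letter (k + 1) (p + q + 1) := by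
    rw [blockWord_of_ne_zero _ _ _ ha, blockWord_of_ne_zero _ _ _ hb, mul_assoc,
      isBraidSeq_letter.ascProd_mul_colourWord_mul_ascProd (by omega)]
    simp only [mul_assoc]
  have hcolour : colourWord c.letter a k ∈ wordsIn c.letter (Set.Iio (k + 1)) :=
    colourWord_mem_wordsIn fun i hi => Nat.lt_succ_of_le hi
  rw [hword]
  exact (unroll (m := p + q) (l := p) (add_assoc k p q ▸ h) hcolour le_rfl (by omega)).imp
    (fun hD => ⟨by omega, hD.2⟩) fun hE => ⟨by omega, hE.2⟩

lemma E_swap_colours (ha : a ≠ 0) (hb : b ≠ 0) (h : c.Flanks k (k + p + p + 2) x y) :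
    c.E (x * (blockWord c.letter k p a * blockWord c.letter (k + p + 1) p b) * y)
      (x * (blockWord c.letter k p b * blockWord c.letter (k + p + 1) p a) * y) := by
  have hn := h.le
  set C := ascProd c.letter (k + 1) (p + p + 1)
  have hmiddle : c.E (x * (colourWord c.letter a k * C * colourWord c.letter b k * C) * y)
      (x * (colourWord c.letter b k * C * colourWord c.letter a k * C) * y) := by
    have hleft : Commute (colourWord c.letter a k * C) x :=
      (commute_of_mem_wordsIn h.left fun i hi => (letter_commute_colourWord hi (by omega)).mul_right
        (isBraidSeq_letter.letter_commute_of_gt hi (ascProd_mem_wordsIn fun j hj => hj.1))).symm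
    have hright : Commute (colourWord c.letter a k * C) y :=
      h.commute_right (mul_mem
        (colourWord_mem_wordsIn fun i hi => (Set.mem_Iic.1 hi).trans_lt (by omega))
        (ascProd_mem_wordsIn fun i hi => hi.2.trans_le (by omega)))
    have hE := E_rotate (c := c) (w := colourWord c.letter b k * C) hleft hright
    simpa only [mul_assoc] using hE
  have hab := (unroll_colours ha hb h).resolve_left fun hD => absurd hD.1 (lt_irrefl p)
  have hba := (unroll_colours hb ha h).resolve_left fun hD => absurd hD.1 (lt_irrefl p)
  rw [two_mul] at hab hba
  exact c.equivalence.trans hab.2 (c.equivalence.trans hmiddle (c.equivalence.symm hba.2))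

end TwoColouredBlocks

lemma flanks_blocksWord {p q : ℕ} {pre suf : List Block}
    (h : totalSize pre + p + q + 2 + totalSize suf ≤ n) :
    c.Flanks (totalSize pre) (totalSize pre + p + q + 2) (blocksWord c.letter 0 pre)
      (blocksWord c.letter (totalSize pre + p + q + 2) suf) where
  left := blocksWord_mem_wordsIn (by rw [zero_add])
  right _ hi := letter_commute_blocksWord hi h
  le := by omega

lemma E_swap_zeros {p q : ℕ} {pre suf : List Block}
    (h : totalSize pre + p + q + 2 + totalSize suf ≤ n) :
    c.E (blocksWord c.letter 0 (pre ++ (p, 0) :: (q, 0) :: suf))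
      (blocksWord c.letter 0 (pre ++ (q, 0) :: (p, 0) :: suf)) := by
  have hE := c.E_swap_cycles (k := totalSize pre) (p := p) (q := q) (x := blocksWord c.g 0 pre)
    (y := blocksWord c.g (totalSize pre + p + q + 2) suf) (by omega)
    (fun i hi _ => c.isBraidSeq.letter_commute_of_lt hi
      (blocksWord_mem_wordsIn (by rw [zero_add])))
    fun i hi hi' => c.isBraidSeq.commute_blocksWord (by omega) hi' h
  simp only [← blockWord_zero] at hE
  rw [← blocksWord_append_pair, add_right_comm (totalSize pre) p q,
    ← blocksWord_append_pair] at hE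
  rw [map_blocksWord, map_blocksWord] at hE
  exact hE

lemma D_or_E_swap {x y : Block} {pre suf : List Block}
    (hn : totalSize (pre ++ x :: y :: suf) ≤ n) (hxy : ¬ sortKey x ≤ sortKey y) :
    c.D (blocksWord c.letter 0 (pre ++ x :: y :: suf)) ∨
      c.E (blocksWord c.letter 0 (pre ++ x :: y :: suf))
        (blocksWord c.letter 0 (pre ++ y :: x :: suf)) := by
  obtain ⟨p, a⟩ := x
  obtain ⟨q, b⟩ := y
  simp only [totalSize_append, totalSize_cons] at hn
  have h := flanks_blocksWord (c := c) (p := p) (q := q) (pre := pre) (suf := suf) (by omega)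
  rcases eq_or_ne a 0 with rfl | ha <;> rcases eq_or_ne b 0 with rfl | hb
  · exact Or.inr (E_swap_zeros (by omega))
  · rw [blocksWord_append_pair]
    exact Or.inl (D_zero_colour hb h)
  · simp [sortKey, ha, Prod.Lex.le_iff] at hxy
  · rw [blocksWord_append_pair]
    rcases unroll_colours ha hb h with ⟨-, hD⟩ | ⟨hpq, -⟩
    · exact Or.inl hD
    · obtain rfl : p = q := by
        simp only [sortKey, ha, hb, if_false, Prod.Lex.le_iff, ofLex_toLex, lt_self_iff_false,
          true_and, false_or, not_or, not_lt] at hxy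
        omega
      rw [blocksWord_append_pair]
      exact Or.inr (E_swap_colours ha hb h)

lemma D_or_E_insertionSort {L : List Block} (hL : totalSize L ≤ n) :
    c.D (blocksWord c.letter 0 L) ∨ c.E (blocksWord c.letter 0 L)
      (blocksWord c.letter 0 (L.insertionSort fun x y => sortKey x ≤ sortKey y)) := by
  have h := of_insertionSort (s := fun x y => sortKey x ≤ sortKey y) (pre := []) (L := L)
    (P := fun L' => totalSize L' ≤ n → c.D (blocksWord c.letter 0 L') ∨
      c.E (blocksWord c.letter 0 L')
        (blocksWord c.letter 0 (L.insertionSort fun x y => sortKey x ≤ sortKey y)))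
  refine h (fun pre x y suf hxy ih hn => ?_) (fun _ => Or.inr (c.equivalence.refl _)) hL
  rcases D_or_E_swap (c := c) hn hxy with hD | hE
  · exact Or.inl hD
  · simp only [totalSize_append, totalSize_cons] at ih hn
    exact (ih (by omega)).imp (c.D_of_E hE) (c.equivalence.trans hE)

lemma exists_sorted_blocks [NeZero r] {x : N} (hx : x ∈ wordsIn c.letter (Set.Iio n)) :
    c.D x ∨ ∃ L : List Block, (∀ b ∈ L, b.2 < r) ∧ totalSize L = n ∧
      L.Pairwise (fun x y => sortKey x ≤ sortKey y) ∧ c.E x (blocksWord c.letter 0 L) := by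
  have h := exists_blocks le_rfl hx fun i _ => Commute.one_right (c.letter i)
  simp only [mul_one] at h
  rcases h with hD | ⟨L, hL, hn, hE⟩
  · exact Or.inl hD
  have hperm := L.perm_insertionSort fun x y => sortKey x ≤ sortKey y
  exact (D_or_E_insertionSort hn.le).imp (c.D_of_E hE) fun hE' =>
    ⟨_, fun b hb => hL b (hperm.mem_iff.1 hb), (hperm.map _).sum_eq.trans hn,
      List.pairwise_insertionSort _ _, c.equivalence.trans hE hE'⟩

end CocenterModel

/-! ### Conjugacy classes of products of blocks -/

section ReturnSets

variable {α : Type*}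

/-- The points of `X` which first return to their `τ`-orbit under `g ^ (p + 1)`, and which are
then moved by `τ ^ a`. With `τ` the shift of colours these are the points on the cycles of `g` of
type `(p, a)`. -/
def returnSet (τ : Equiv.Perm α) (X : Set α) (p a : ℕ) (g : Equiv.Perm α) : Set α :=
  {z | z ∈ X ∧ (g ^ (p + 1)) z = (τ ^ a) z ∧ ∀ i < p, ∀ b : ℕ, (g ^ (i + 1)) z ≠ (τ ^ b) z}

open scoped Pointwise in
lemma ncard_returnSet_conj {τ h : Equiv.Perm α} {X : Set α} (hτ : h ∈ Subgroup.centralizer {τ})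
    (hX : h ∈ MulAction.stabilizer (Equiv.Perm α) X) (p a : ℕ) (g : Equiv.Perm α) :
    (returnSet τ X p a (h * g * h⁻¹)).ncard = (returnSet τ X p a g).ncard := by
  have hconj : ∀ i z, ((h * g * h⁻¹) ^ i) (h z) = h ((g ^ i) z) := fun i z => by
    simp [conj_pow]
  have hcomm : ∀ i z, (τ ^ i) (h z) = h ((τ ^ i) z) := fun i z =>
    DFunLike.congr_fun ((show Commute τ h from
      Subgroup.mem_centralizer_singleton_iff.1 hτ |>.symm).pow_left i).eq z
  have himage : returnSet τ X p a (h * g * h⁻¹) = h '' returnSet τ X p a g := by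
    ext z
    obtain ⟨z, rfl⟩ := h.surjective z
    have hz : h z ∈ X ↔ z ∈ X := MulAction.mem_stabilizer_set.1 hX z
    simp only [h.injective.mem_set_image, returnSet, Set.mem_ofPred_eq, hz, hconj, hcomm,
      h.injective.eq_iff, ne_eq]
  rw [himage, Set.ncard_image_of_injective _ h.injective]

end ReturnSets

section ColouredPermutations

variable {r n : ℕ}

/-- The permutation of coloured points adding `1` to every colour. -/
def colourShift (r : ℕ) : Equiv.Perm (ℕ × ZMod r) :=
  (Equiv.refl ℕ).prodCongr (Equiv.addRight 1)

/-- The coloured points with position below `n`. -/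
def pointsBelow (r n : ℕ) : Set (ℕ × ZMod r) := {z | z.1 < n}

/-- The permutations of `ℕ × ZMod r`, the positions with colours, by which the generators act: `t`
adds `1` to the colours at position `0`, and `s_i` exchanges the positions `i - 1` and `i`. -/
def letterPerm (r n i : ℕ) : Equiv.Perm (ℕ × ZMod r) :=
  if n ≤ i then 1
  else if i = 0 then
    Equiv.prodShear (Equiv.refl ℕ) fun x => Equiv.addRight (if x = 0 then 1 else 0)
  else (Equiv.swap (i - 1) i).prodCongr (Equiv.refl _)

/-- The permutation `g` acts on the positions `s, …, s + p` as a cycle of colour `a`. -/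
def ActsAsCycle (g : Equiv.Perm (ℕ × ZMod r)) (s p a : ℕ) : Prop :=
  ∀ z : ℕ × ZMod r, s ≤ z.1 → z.1 ≤ s + p →
    g z = if z.1 < s + p then (z.1 + 1, z.2) else (s, z.2 + a)

/-- The block containing the point `x` when the blocks are lined up from the point `k` on; the
value `(0, 0)` is returned for points beyond the last block. -/
def blockAt : ℕ → List Block → ℕ → Block
  | _, [], _ => (0, 0)
  | k, y :: L, x => if x < k + y.1 + 1 then y else blockAt (k + y.1 + 1) L x

lemma colourShift_pow_apply (b : ℕ) (z : ℕ × ZMod r) :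
    (colourShift r ^ b) z = (z.1, z.2 + b) := by
  induction b with
  | zero => simp
  | succ b ih =>
    rw [pow_succ', Equiv.Perm.mul_apply, ih]
    simp [colourShift, add_assoc]

lemma letterPerm_zero (hn : 1 ≤ n) (z : ℕ × ZMod r) :
    letterPerm r n 0 z = (z.1, z.2 + if z.1 = 0 then 1 else 0) := by
  simp [letterPerm, Nat.one_le_iff_ne_zero.1 hn]

lemma letterPerm_zero_pow (hn : 1 ≤ n) (a : ℕ) (z : ℕ × ZMod r) :
    (letterPerm r n 0 ^ a) z = (z.1, z.2 + if z.1 = 0 then a else 0) := by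
  induction a with
  | zero => simp
  | succ a ih =>
    rw [pow_succ', Equiv.Perm.mul_apply, ih, letterPerm_zero hn]
    split_ifs <;> simp [add_assoc]

lemma letterPerm_of_pos {i : ℕ} (h1 : 1 ≤ i) (hi : i < n) :
    letterPerm r n i = (Equiv.swap (i - 1) i).prodCongr (Equiv.refl _) := by
  rw [letterPerm, if_neg hi.not_ge, if_neg (Nat.one_le_iff_ne_zero.1 h1)]

lemma letterPerm_of_pos_apply {i : ℕ} (h1 : 1 ≤ i) (hi : i < n) (z : ℕ × ZMod r) :
    letterPerm r n i z =
      (if z.1 = i - 1 then i else if z.1 = i then i - 1 else z.1, z.2) := by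
  simp [letterPerm_of_pos h1 hi, Equiv.swap_apply_def, Prod.ext_iff]

lemma letterPerm_of_le {i : ℕ} (hi : n ≤ i) : letterPerm r n i = 1 := if_pos hi

lemma ascProd_letterPerm {k m : ℕ} (h : k + m < n) (z : ℕ × ZMod r) :
    ascProd (letterPerm r n) (k + 1) m z =
      (if k ≤ z.1 ∧ z.1 < k + m then z.1 + 1 else if z.1 = k + m then k else z.1, z.2) := by
  induction m generalizing z with
  | zero => ext <;> simp [ascProd]; split_ifs <;> omega
  | succ m ih =>
    rw [ascProd, Equiv.Perm.mul_apply, ih (by omega), letterPerm_of_pos_apply (by omega) (by omega)]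
    ext
    · simp only; split_ifs <;> omega
    · rfl

lemma colourWord_letterPerm {k a : ℕ} (h : k < n) (z : ℕ × ZMod r) :
    colourWord (letterPerm r n) a k z = (z.1, z.2 + if z.1 = k then a else 0) := by
  induction k generalizing z with
  | zero => exact letterPerm_zero_pow h a z
  | succ k ih =>
    rw [colourWord_succ, Equiv.Perm.mul_apply, Equiv.Perm.mul_apply, ih (by omega),
      letterPerm_of_pos_apply (by omega) h, letterPerm_of_pos_apply (by omega) h]
    ext
    · simp only; split_ifs <;> omega
    · refine congrArg (fun m : ℕ => z.2 + (m : ZMod r)) (if_congr ?_ rfl rfl)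
      simp only
      split_ifs <;> omega

lemma blockWord_letterPerm {k p a : ℕ} (h : k + p < n) (z : ℕ × ZMod r) :
    blockWord (letterPerm r n) k p a z = if k ≤ z.1 ∧ z.1 < k + p then (z.1 + 1, z.2)
      else if z.1 = k + p then (k, z.2 + a) else z := by
  have hcolour : (if a = 0 then 1 else colourWord (letterPerm r n) a k) =
      colourWord (letterPerm r n) a k := by
    rw [ite_eq_right_iff]
    rintro rfl
    ext1 z
    simp [colourWord_letterPerm (show k < n by omega)]
  rw [blockWord, hcolour, Equiv.Perm.mul_apply, colourWord_letterPerm (by omega),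
    ascProd_letterPerm h]
  by_cases h1 : k ≤ z.1 ∧ z.1 < k + p
  · simp [h1, show z.1 + 1 ≠ k by omega]
  · by_cases h2 : z.1 = k + p
    · simp [h2]
    · simp [h1, h2, show z.1 ≠ k by omega]

lemma blocksWord_letterPerm_of_lt {L : List Block} {k : ℕ} (h : k + totalSize L ≤ n)
    {z : ℕ × ZMod r} (hz : z.1 < k) : blocksWord (letterPerm r n) k L z = z := by
  induction L generalizing k with
  | nil => rfl
  | cons x L ih =>
    rw [totalSize_cons] at h
    rw [blocksWord, Equiv.Perm.mul_apply, ih (by omega) (by omega),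
      blockWord_letterPerm (by omega), if_neg (by omega), if_neg (by omega)]

lemma le_blocksWord_letterPerm {L : List Block} {k : ℕ} (h : k + totalSize L ≤ n)
    {z : ℕ × ZMod r} (hz : k ≤ z.1) : k ≤ (blocksWord (letterPerm r n) k L z).1 := by
  by_contra! hlt
  have hfix := (blocksWord (letterPerm r n) k L).injective
    (blocksWord_letterPerm_of_lt h hlt)
  rw [hfix] at hlt
  omega

lemma actsAsCycle_blocksWord {L : List Block} {k x : ℕ} (h : k + totalSize L ≤ n) (h1 : k ≤ x)
    (h2 : x < k + totalSize L) :
    blockAt k L x ∈ L ∧ ∃ s, k ≤ s ∧ s ≤ x ∧ x ≤ s + (blockAt k L x).1 ∧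
      ActsAsCycle (blocksWord (letterPerm r n) k L) s (blockAt k L x).1 (blockAt k L x).2 := by
  induction L generalizing k with
  | nil => simp only [totalSize, List.map_nil, List.sum_nil] at h2; omega
  | cons y L ih =>
    rw [totalSize_cons] at h h2
    rw [blockAt]
    split_ifs with hx
    · refine ⟨List.mem_cons_self, k, le_rfl, h1, by omega, fun z hz1 hz2 => ?_⟩
      rw [blocksWord, Equiv.Perm.mul_apply, blocksWord_letterPerm_of_lt (by omega) (by omega),
        blockWord_letterPerm (by omega)]
      by_cases hz : z.1 < k + y.1
      · rw [if_pos ⟨hz1, hz⟩, if_pos hz]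
      · rw [if_neg (by omega), if_pos (by omega), if_neg hz]
    · obtain ⟨hmem, s, hs1, hs2, hs3, hcycle⟩ :=
        ih (k := k + y.1 + 1) (by omega) (by omega) (by omega)
      refine ⟨List.mem_cons_of_mem _ hmem, s, by omega, hs2, hs3, fun z hz1 hz2 => ?_⟩
      have hge := le_blocksWord_letterPerm (r := r) (n := n) (k := k + y.1 + 1) (L := L) (z := z)
        (by omega) (by omega)
      rw [blocksWord, Equiv.Perm.mul_apply, ← hcycle z hz1 hz2, blockWord_letterPerm (by omega),
        if_neg (by omega), if_neg (by omega)]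

lemma ActsAsCycle.pow_apply {g : Equiv.Perm (ℕ × ZMod r)} {s p a : ℕ} (hg : ActsAsCycle g s p a)
    {j i : ℕ} (hj : j ≤ p) (hi : i ≤ p + 1) (e : ZMod r) :
    (g ^ i) (s + j, e) = if j + i ≤ p then (s + j + i, e) else (s + j + i - (p + 1), e + a) := by
  induction i with
  | zero => simp [hj]
  | succ i ih =>
    rw [pow_succ', Equiv.Perm.mul_apply, ih (by omega)]
    split_ifs with h h' h'
    · rw [hg _ (by simp only; omega) (by simp only; omega), if_pos (by simp only; omega)]
      rfl
    · rw [hg _ (by simp only; omega) (by simp only; omega), if_neg (by simp only; omega)]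
      ext
      · simp only; omega
      · rfl
    · omega
    · rw [hg _ (by simp only; omega) (by simp only; omega), if_pos (by simp only; omega)]
      ext
      · simp only; omega
      · rfl

lemma ActsAsCycle.mem_returnSet_iff {g : Equiv.Perm (ℕ × ZMod r)} {s q b p a : ℕ}
    (hg : ActsAsCycle g s q b) (ha : a < r) (hb : b < r) {z : ℕ × ZMod r} (hz : z.1 < n)
    (h1 : s ≤ z.1) (h2 : z.1 ≤ s + q) :
    z ∈ returnSet (colourShift r) (pointsBelow r n) p a g ↔ (q, b) = (p, a) := by
  obtain ⟨x, e⟩ := z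
  obtain ⟨j, rfl⟩ : ∃ j, x = s + j := ⟨x - s, (Nat.add_sub_cancel' h1).symm⟩
  have hj : j ≤ q := by simp only at h2; omega
  have hreturn : (g ^ (q + 1)) (s + j, e) = (colourShift r ^ b) (s + j, e) := by
    rw [hg.pow_apply hj le_rfl, if_neg (by omega), Nat.add_sub_cancel, colourShift_pow_apply]
  have hfirst : ∀ i < q, ∀ b' : ℕ, (g ^ (i + 1)) (s + j, e) ≠ (colourShift r ^ b') (s + j, e) := by
    intro i hi b' h
    have hpos := congrArg Prod.fst h
    rw [hg.pow_apply hj (by omega), colourShift_pow_apply] at hpos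
    split_ifs at hpos <;> simp only at hpos <;> omega
  constructor
  · rintro ⟨-, hret, hfst⟩
    obtain rfl : q = p := by
      rcases Nat.lt_trichotomy q p with h | h | h
      · exact absurd hreturn (hfst q h b)
      · exact h
      · exact absurd hret (hfirst p h a)
    rw [hreturn, colourShift_pow_apply, colourShift_pow_apply] at hret
    have hcolour := add_left_cancel (congrArg Prod.snd hret)
    rw [ZMod.natCast_eq_natCast_iff', Nat.mod_eq_of_lt ha, Nat.mod_eq_of_lt hb] at hcolour
    rw [hcolour]
  · rintro h
    obtain ⟨rfl, rfl⟩ := Prod.mk.inj h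
    exact ⟨hz, hreturn, hfirst⟩

lemma card_filter_blockAt (L : List Block) (k p a : ℕ) :
    ((Finset.Ico k (k + totalSize L)).filter fun x => blockAt k L x = (p, a)).card =
      (p + 1) * L.count (p, a) := by
  simp only [Finset.card_filter]
  induction L generalizing k with
  | nil => simp [totalSize]
  | cons y L ih =>
    have hhead : ∀ x ∈ Finset.Ico k (k + y.1 + 1),
        (if blockAt k (y :: L) x = (p, a) then 1 else 0) = if y = (p, a) then 1 else 0 :=
      fun x hx => by rw [blockAt, if_pos (Finset.mem_Ico.1 hx).2]
    have htail : ∀ x ∈ Finset.Ico (k + y.1 + 1) (k + y.1 + 1 + totalSize L),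
        (if blockAt k (y :: L) x = (p, a) then 1 else 0) =
          if blockAt (k + y.1 + 1) L x = (p, a) then 1 else 0 :=
      fun x hx => by rw [blockAt, if_neg (Finset.mem_Ico.1 hx).1.not_gt]
    rw [totalSize_cons, show k + (y.1 + 1 + totalSize L) = k + y.1 + 1 + totalSize L by omega,
      ← Finset.sum_Ico_consecutive _ (show k ≤ k + y.1 + 1 by omega) (by omega),
      Finset.sum_congr rfl hhead, Finset.sum_congr rfl htail, ih, List.count_cons]
    by_cases hy : y = (p, a)
    · simp [hy, add_assoc]; ring
    · simp [hy]

lemma ncard_returnSet_blocksWord [NeZero r] {L : List Block} (hL : ∀ b ∈ L, b.2 < r)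
    (hn : totalSize L = n) {p a : ℕ} (ha : a < r) :
    (returnSet (colourShift r) (pointsBelow r n) p a (blocksWord (letterPerm r n) 0 L)).ncard =
      (p + 1) * L.count (p, a) * r := by
  have hset : returnSet (colourShift r) (pointsBelow r n) p a (blocksWord (letterPerm r n) 0 L) =
      (((Finset.Ico 0 (0 + totalSize L)).filter fun x => blockAt 0 L x = (p, a)) ×ˢ
        (Finset.univ : Finset (ZMod r)) : Finset (ℕ × ZMod r)) := by
    ext z
    simp only [Finset.coe_product, Set.mem_prod, Finset.mem_coe, Finset.mem_filter,
      Finset.mem_Ico, Finset.mem_univ, and_true, zero_add, hn, zero_le, true_and]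
    by_cases hz : z.1 < n
    · obtain ⟨hmem, s, -, hs, hs', hcycle⟩ := actsAsCycle_blocksWord (r := r) (n := n) (L := L)
        (k := 0) (x := z.1) (by omega) (Nat.zero_le _) (by omega)
      rw [hcycle.mem_returnSet_iff ha (hL _ hmem) hz hs hs', and_iff_right hz]
    · exact iff_of_false (fun h => hz h.1) fun h => hz h.1
  rw [hset, Set.ncard_coe_finset, Finset.card_product, card_filter_blockAt, Finset.card_univ,
    ZMod.card]

open scoped Pointwise in
lemma letterPerm_mem (hn : 1 ≤ n) (i : ℕ) : letterPerm r n i ∈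
    Subgroup.centralizer {colourShift r} ⊓ MulAction.stabilizer _ (pointsBelow r n) := by
  rw [Subgroup.mem_inf, Subgroup.mem_centralizer_singleton_iff, MulAction.mem_stabilizer_set]
  have hshift : ∀ z, colourShift r z = (z.1, z.2 + 1) := fun _ => rfl
  rcases Nat.lt_or_ge i n with hi | hi
  · rcases Nat.eq_zero_or_pos i with rfl | h1
    · refine ⟨Equiv.ext fun z => ?_, fun z => ?_⟩
      · simp only [Equiv.Perm.mul_apply, hshift, letterPerm_zero hn, add_right_comm]
      · simp only [Equiv.Perm.smul_def, pointsBelow, Set.mem_ofPred_eq, letterPerm_zero hn]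
    · refine ⟨Equiv.ext fun z => ?_, fun z => ?_⟩
      · simp only [Equiv.Perm.mul_apply, hshift, letterPerm_of_pos_apply h1 hi]
      · simp only [Equiv.Perm.smul_def, pointsBelow, Set.mem_ofPred_eq,
          letterPerm_of_pos_apply h1 hi]
        split_ifs <;> omega
  · rw [letterPerm_of_le hi]
    exact ⟨by rw [one_mul, mul_one], fun _ => Iff.rfl⟩

open CRG

lemma commute_letterPerm (hn : 1 ≤ n) {i j : ℕ} (hij : i + 2 ≤ j) :
    Commute (letterPerm r n i) (letterPerm r n j) := by
  rcases le_or_gt n j with hj | hj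
  · rw [letterPerm_of_le hj]
    exact Commute.one_right _
  rcases Nat.eq_zero_or_pos i with rfl | hi
  · refine Equiv.ext fun z => ?_
    simp only [Equiv.Perm.mul_apply, letterPerm_of_pos_apply (show 1 ≤ j by omega) hj,
      letterPerm_zero hn]
    refine Prod.ext rfl (congrArg (z.2 + ·) (if_congr ?_ rfl rfl))
    split_ifs <;> omega
  · have hdisjoint : [i - 1, i, j - 1, j].Nodup := by
      simp only [List.nodup_cons, List.mem_cons, List.not_mem_nil, List.nodup_nil]
      grind
    have hswap := (Equiv.Perm.disjoint_swap_swap hdisjoint).commute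
    rw [letterPerm_of_pos hi (by omega), letterPerm_of_pos (by omega) hj]
    refine Equiv.ext fun z => Prod.ext ?_ ?_
    · simpa using DFunLike.congr_fun hswap.eq z.1
    · simp

lemma letterPerm_braid {i : ℕ} (h1 : 1 ≤ i) (hi : i + 1 < n) :
    letterPerm r n i * letterPerm r n (i + 1) * letterPerm r n i =
      letterPerm r n (i + 1) * letterPerm r n i * letterPerm r n (i + 1) := by
  have hswap : Equiv.swap (i - 1) i * Equiv.swap i (i + 1) * Equiv.swap (i - 1) i =
      Equiv.swap i (i + 1) * Equiv.swap (i - 1) i * Equiv.swap i (i + 1) := by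
    rw [Equiv.swap_mul_swap_mul_swap (by omega) (by omega), Equiv.swap_comm (i - 1) i,
      Equiv.swap_comm i (i + 1), Equiv.swap_mul_swap_mul_swap (by omega) (by omega),
      Equiv.swap_comm]
  rw [letterPerm_of_pos h1 (by omega), letterPerm_of_pos (by omega) hi, Nat.add_sub_cancel]
  refine Equiv.ext fun z => Prod.ext ?_ ?_
  · simpa using DFunLike.congr_fun hswap z.1
  · simp

lemma letterPerm_zero_one_relation (hn : 2 ≤ n) :
    letterPerm r n 0 * letterPerm r n 1 * letterPerm r n 0 * letterPerm r n 1 =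
      letterPerm r n 1 * letterPerm r n 0 * letterPerm r n 1 * letterPerm r n 0 := by
  refine Equiv.ext fun z => ?_
  simp only [Equiv.Perm.mul_apply, letterPerm_zero (show 1 ≤ n by omega),
    letterPerm_of_pos_apply le_rfl (show 1 < n by omega)]
  by_cases h0 : z.1 = 0
  · simp [h0]
  · by_cases h1 : z.1 = 1 <;> simp [h0, h1]

lemma letterPerm_sq {i : ℕ} (h1 : 1 ≤ i) (hi : i < n) : letterPerm r n i ^ 2 = 1 := by
  rw [letterPerm_of_pos h1 hi]
  exact Equiv.ext fun z => Prod.ext (by simp [sq]) (by simp [sq])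

lemma lift_letterPerm_eq_one (hn : 1 ≤ n) :
    ∀ w ∈ rels r n, FreeGroup.lift (letterPerm r n) w = 1 := by
  rintro w (rfl | ⟨i, h1, h2, rfl⟩ | ⟨h, rfl⟩ | ⟨i, h1, _, rfl⟩ | ⟨i, h1, h2, rfl⟩ |
    ⟨i, j, _, h2, _, rfl⟩ | ⟨i, h1, rfl⟩) <;>
    simp only [map_mul, map_inv, map_pow, FreeGroup.lift_apply_of, mul_inv_eq_one]
  · refine Equiv.ext fun z => ?_
    simp [letterPerm_zero_pow hn]
  · exact letterPerm_sq h1 h2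
  · exact letterPerm_zero_one_relation h
  · exact commute_letterPerm hn h1
  · exact letterPerm_braid h1 h2
  · exact commute_letterPerm hn h2
  · exact letterPerm_of_le h1

/-- The action of `W_n` on coloured points. -/
def permRep (hn : 1 ≤ n) : W r n →* Equiv.Perm (ℕ × ZMod r) :=
  PresentedGroup.toGroup (lift_letterPerm_eq_one hn)

lemma permRep_comp_gen (hn : 1 ≤ n) : permRep hn ∘ gen r n = letterPerm r n :=
  funext fun _ => PresentedGroup.toGroup.of _

open scoped Pointwise in
lemma permRep_mem (hn : 1 ≤ n) (w : W r n) : permRep hn w ∈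
    Subgroup.centralizer {colourShift r} ⊓ MulAction.stabilizer _ (pointsBelow r n) := by
  have hw : w ∈ Subgroup.closure (Set.range (gen r n)) :=
    (PresentedGroup.closure_range_of (rels r n)).symm ▸ Subgroup.mem_top w
  induction hw using Subgroup.closure_induction with
  | mem _ hx =>
    obtain ⟨i, rfl⟩ := hx
    rw [show permRep hn (gen r n i) = letterPerm r n i from congrFun (permRep_comp_gen hn) i]
    exact letterPerm_mem hn i
  | one => exact map_one (permRep hn) ▸ one_mem _
  | mul x y _ _ hx hy => exact map_mul (permRep hn) x y ▸ mul_mem hx hy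
  | inv x _ hx => exact map_inv (permRep hn) x ▸ inv_mem hx

lemma perm_of_isConj [NeZero r] (hn : 1 ≤ n) {L L' : List Block} (hL : ∀ b ∈ L, b.2 < r)
    (ht : totalSize L = n) (hL' : ∀ b ∈ L', b.2 < r) (ht' : totalSize L' = n)
    (h : IsConj (blocksWord (gen r n) 0 L) (blocksWord (gen r n) 0 L')) : L.Perm L' := by
  rw [List.perm_iff_count]
  rintro ⟨p, a⟩
  by_cases ha : a < r
  · obtain ⟨w, hw⟩ := isConj_iff.1 h
    have hconj := congrArg (permRep hn) hw
    simp only [map_mul, map_inv, map_blocksWord, permRep_comp_gen] at hconj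
    have hcard := ncard_returnSet_conj (permRep_mem hn w).1 (permRep_mem hn w).2 p a
      (blocksWord (letterPerm r n) 0 L)
    rw [hconj, ncard_returnSet_blocksWord hL ht ha, ncard_returnSet_blocksWord hL' ht' ha] at hcard
    exact (Nat.eq_of_mul_eq_mul_left p.succ_pos
      (Nat.eq_of_mul_eq_mul_right (NeZero.pos r) hcard)).symm
  · rw [List.count_eq_zero_of_not_mem fun hm => ha (hL _ hm),
      List.count_eq_zero_of_not_mem fun hm => ha (hL' _ hm)]

end ColouredPermutations

/-! ### Relations in `W_n` and in the Hecke algebra -/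

section ReflectionGroup

open CRG

variable {r n : ℕ}

lemma gen_of_ge {i : ℕ} (h : n ≤ i) : gen r n i = 1 :=
  PresentedGroup.one_of_mem (rels := rels r n) (x := FreeGroup.of i)
    (Or.inr (Or.inr (Or.inr (Or.inr (Or.inr (Or.inr ⟨i, h, rfl⟩))))))

lemma gen_zero_pow : gen r n 0 ^ r = 1 := by
  have hrel := PresentedGroup.one_of_mem (rels := rels r n) (Or.inl rfl)
  rwa [map_pow] at hrel

lemma gen_mul_self {i : ℕ} (h1 : 1 ≤ i) (h : i < n) : gen r n i * gen r n i = 1 := by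
  have hrel := PresentedGroup.one_of_mem (rels := rels r n) (Or.inr (Or.inl ⟨i, h1, h, rfl⟩))
  rwa [map_pow, sq] at hrel

lemma gen_braid_zero (h : 1 < n) :
    Commute (gen r n 0) (gen r n 1 * gen r n 0 * gen r n 1) := by
  have hrel := PresentedGroup.one_of_mem (rels := rels r n) (Or.inr (Or.inr (Or.inl ⟨h, rfl⟩)))
  rw [map_mul, map_inv, mul_inv_eq_one] at hrel
  simp only [map_mul, mul_assoc] at hrel
  simp only [Commute, SemiconjBy, mul_assoc]
  exact hrel

lemma isBraidSeq_gen : IsBraidSeq (gen r n) n where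
  commute i j hij := by
    rcases Nat.lt_or_ge j n with hj | hj
    · have hmem : FreeGroup.of i * FreeGroup.of j * (FreeGroup.of j * FreeGroup.of i)⁻¹ ∈
          rels r n := by
        rcases Nat.eq_zero_or_pos i with rfl | hi
        · exact Or.inr (Or.inr (Or.inr (Or.inl ⟨j, hij, hj, rfl⟩)))
        · exact Or.inr (Or.inr (Or.inr (Or.inr (Or.inr (Or.inl ⟨i, j, hi, hij, hj, rfl⟩)))))
      have hrel := PresentedGroup.one_of_mem hmem
      rwa [map_mul, map_inv, mul_inv_eq_one, map_mul, map_mul] at hrel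
    · rw [gen_of_ge hj]
      exact Commute.one_right _
  braid i h1 h := by
    have hrel := PresentedGroup.one_of_mem (rels := rels r n)
      (Or.inr (Or.inr (Or.inr (Or.inr (Or.inl ⟨i, h1, h, rfl⟩)))))
    rw [map_mul, map_inv, mul_inv_eq_one] at hrel
    simp only [map_mul] at hrel
    exact hrel

lemma commute_gen_zero (h : 1 < n) (a : ℕ) :
    Commute (gen r n 0) (gen r n 1 * gen r n 0 ^ a * gen r n 1) := by
  have hinv : (gen r n 1)⁻¹ = gen r n 1 := inv_eq_of_mul_eq_one_left (gen_mul_self le_rfl h)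
  have hpow := conj_pow (i := a) (a := gen r n 1) (b := gen r n 0)
  rw [hinv] at hpow
  rw [← hpow]
  exact (gen_braid_zero h).pow_right a

end ReflectionGroup

section QuadraticRelation

variable {R A : Type*} [CommRing R] [Ring A] [Algebra R A] {ξ : R} {s t : A}

lemma mul_self_of_quadratic (h : (s - algebraMap R A ξ) * (s + 1) = 0) :
    s * s = (ξ - 1) • s + ξ • (1 : A) := by
  rw [Algebra.algebraMap_eq_smul_one] at h
  rw [sub_smul, one_smul, ← sub_eq_zero, ← h]
  simp only [sub_mul, mul_add, smul_mul_assoc, one_mul, mul_one]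
  abel

lemma mul_add_smul_one_of_mul_self (h : s * s = (ξ - 1) • s + ξ • (1 : A)) :
    s * (s + (1 - ξ) • (1 : A)) = ξ • (1 : A) := by
  rw [mul_add, h, mul_smul_comm, mul_one, sub_smul, sub_smul]
  abel

lemma add_smul_one_mul_of_mul_self (h : s * s = (ξ - 1) • s + ξ • (1 : A)) :
    (s + (1 - ξ) • (1 : A)) * s = ξ • (1 : A) := by
  rw [add_mul, h, smul_mul_assoc, one_mul, sub_smul, sub_smul]
  abel

lemma isUnit_of_mul_self (hξ : IsUnit ξ) (h : s * s = (ξ - 1) • s + ξ • (1 : A)) : IsUnit s := by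
  obtain ⟨x, rfl⟩ := hξ
  refine ⟨⟨s, (↑x⁻¹ : R) • (s + (1 - (x : R)) • (1 : A)), ?_, ?_⟩, rfl⟩
  · rw [mul_smul_comm, mul_add_smul_one_of_mul_self h, smul_smul, Units.inv_mul, one_smul]
  · rw [smul_mul_assoc, add_smul_one_mul_of_mul_self h, smul_smul, Units.inv_mul, one_smul]

lemma commutator_conj_pow_of_mul_self (hξ : IsUnit ξ)
    (hs : s * s = (ξ - 1) • s + ξ • (1 : A)) (hst : Commute t (s * t * s)) (a : ℕ) :
    t * (s * t ^ a * s) - s * t ^ a * s * t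
      = (1 - ξ) • (t ^ a * s * t) - (1 - ξ) • (t * s * t ^ a) := by
  have hright := mul_add_smul_one_of_mul_self hs
  have hleft := add_smul_one_mul_of_mul_self hs
  -- `u` is the multiple `ξ s⁻¹` of the inverse of `s`
  set u := s + (1 - ξ) • (1 : A) with hu
  have hpow := (hst.pow_left a).eq
  have hξu : ξ • (u * t ^ a * s * t) = ξ • (t * s * t ^ a * u) := by
    calc ξ • (u * t ^ a * s * t) = u * (t ^ a * (s * t * s)) * u := by
          simp only [mul_assoc, hright, mul_smul_comm, mul_one]
      _ = (u * s) * t * s * t ^ a * u := by rw [hpow]; simp only [mul_assoc]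
      _ = ξ • (t * s * t ^ a * u) := by rw [hleft]; simp only [smul_mul_assoc, one_mul]
  have hcancel : u * t ^ a * s * t = t * s * t ^ a * u := hξ.smul_left_cancel.1 hξu
  simp only [hu, add_mul, mul_add, smul_mul_assoc, mul_smul_comm, mul_one, one_mul] at hcancel
  rw [sub_eq_sub_iff_add_eq_add, add_comm ((1 - ξ) • _), ← mul_assoc, ← mul_assoc]
  exact hcancel.symm

end QuadraticRelation

section HeckeAlgebra

open CHA

variable {R : Type} [CommRing R] {r n : ℕ} {ξ : R} {Q : Fin r → R}

lemma Tn_of_lt {i : ℕ} (h : i < n) : Tn R r n ξ Q i = T R r n ξ Q ⟨i, h⟩ := dif_pos h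

lemma Tn_of_ge {i : ℕ} (h : n ≤ i) : Tn R r n ξ Q i = 1 := dif_neg h.not_gt

lemma isBraidSeq_Tn : IsBraidSeq (Tn R r n ξ Q) n where
  commute i j hij := by
    rcases Nat.lt_or_ge j n with hj | hj
    · have hrel := RingQuot.mkAlgHom_rel R (show rel R r n ξ Q _ _ from
        Or.inr (Or.inr (Or.inr (Or.inl ⟨i, j, by omega, hj, hij, rfl, rfl⟩))))
      rw [map_mul, map_mul] at hrel
      rwa [Tn_of_lt hj, Tn_of_lt (by omega : i < n)]
    · rw [Tn_of_ge hj]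
      exact Commute.one_right _
  braid i h1 h := by
    have hrel := RingQuot.mkAlgHom_rel R (show rel R r n ξ Q _ _ from
      Or.inr (Or.inr (Or.inr (Or.inr ⟨i, h, h1, rfl, rfl⟩))))
    simp only [map_mul] at hrel
    rwa [Tn_of_lt h, Tn_of_lt (by omega : i < n)]

lemma Tn_braid_zero (h : 1 < n) :
    Commute (Tn R r n ξ Q 0) (Tn R r n ξ Q 1 * Tn R r n ξ Q 0 * Tn R r n ξ Q 1) := by
  have hrel := RingQuot.mkAlgHom_rel R (show rel R r n ξ Q _ _ from
    Or.inr (Or.inl ⟨by omega, h, rfl, rfl⟩))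
  rw [Tn_of_lt h, Tn_of_lt (by omega : 0 < n)]
  simp only [map_mul, mul_assoc] at hrel
  simp only [Commute, SemiconjBy, mul_assoc]
  exact hrel

lemma Tn_mul_self {i : ℕ} (h1 : 1 ≤ i) (h : i < n) :
    Tn R r n ξ Q i * Tn R r n ξ Q i = (ξ - 1) • Tn R r n ξ Q i + ξ • 1 := by
  have hrel := RingQuot.mkAlgHom_rel R (show rel R r n ξ Q _ _ from
    Or.inr (Or.inr (Or.inl ⟨i, h, h1, rfl, rfl⟩)))
  simp only [map_mul, map_sub, map_add, map_one, map_zero, AlgHom.commutes] at hrel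
  rw [Tn_of_lt h]
  exact mul_self_of_quadratic hrel

lemma Tn_zero_pow_mem_span (hn : 1 ≤ n) :
    Tn R r n ξ Q 0 ^ r ∈ Submodule.span R {x | ∃ a < r, Tn R r n ξ Q 0 ^ a = x} := by
  rcases subsingleton_or_nontrivial R with _ | _
  · have := Module.subsingleton R (Alg R r n ξ Q)
    rw [Subsingleton.elim (Tn R r n ξ Q 0 ^ r) 0]
    exact zero_mem _
  set p : Polynomial R := ∏ i, (Polynomial.X - Polynomial.C (Q i)) with hp
  have hroot : Polynomial.aeval (Tn R r n ξ Q 0) p = 0 := by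
    have hrel := RingQuot.mkAlgHom_rel R (show rel R r n ξ Q _ _ from Or.inl ⟨hn, rfl, rfl⟩)
    rw [map_zero, map_list_prod, List.map_ofFn] at hrel
    rw [hp, ← List.prod_ofFn, map_list_prod, List.map_ofFn, ← hrel, Tn_of_lt hn]
    congr 2
    funext i
    simp [T]
  have hmonic : p.Monic := Polynomial.monic_prod_X_sub_C Q Finset.univ
  have hdegree : p.natDegree = r := by
    rw [hp, Polynomial.natDegree_finsetProd_X_sub_C_eq_card, Finset.card_univ, Fintype.card_fin]
  rw [hmonic.as_sum, hdegree, map_add, map_pow, Polynomial.aeval_X] at hroot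
  rw [eq_neg_of_add_eq_zero_left hroot, map_sum]
  refine neg_mem (sum_mem fun a ha => ?_)
  rw [map_mul, Polynomial.aeval_C, map_pow, Polynomial.aeval_X, ← Algebra.smul_def]
  exact Submodule.smul_mem _ _ (Submodule.subset_span ⟨a, Finset.mem_range.1 ha, rfl⟩)

end HeckeAlgebra

/-! ### The cocenter filtered by word length -/

section EvaluatedWords

open CRG CHA

variable (R : Type) [CommRing R] (r n : ℕ) (ξ : R) (Q : Fin r → R)

/-- A word in the letters `0, 1, …` evaluated in the Hecke algebra, evaluated in `W_n`, and
measured by its length. -/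
def evaluation : FreeMonoid ℕ →* Alg R r n ξ Q × W r n × Multiplicative ℕ :=
  FreeMonoid.lift fun i => (Tn R r n ξ Q i, gen r n i, Multiplicative.ofAdd 1)

/-- The monoid of words, two words being identified if they have the same length and the same
values in the Hecke algebra and in `W_n`. -/
abbrev EvaluatedWord : Type := MonoidHom.mrange (evaluation R r n ξ Q)

namespace EvaluatedWord

variable {R r n ξ Q}

/-- The word of length one with the letter `i`. -/
def letter (i : ℕ) : EvaluatedWord R r n ξ Q := ⟨evaluation R r n ξ Q (FreeMonoid.of i), ⟨_, rfl⟩⟩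

/-- The word with the given list of letters. -/
def ofList (l : List ℕ) : EvaluatedWord R r n ξ Q := (l.map letter).prod

/-- The value `T_{x_1} ⋯ T_{x_k}` of a word `x_1 ⋯ x_k`. -/
def heckeValue : EvaluatedWord R r n ξ Q →* Alg R r n ξ Q :=
  (MonoidHom.fst _ _).comp (Submonoid.subtype _)

/-- The value of a word in `W_n`. -/
def groupValue : EvaluatedWord R r n ξ Q →* W r n :=
  ((MonoidHom.fst _ _).comp (MonoidHom.snd _ _)).comp (Submonoid.subtype _)

/-- The length of a word. -/
def len (x : EvaluatedWord R r n ξ Q) : ℕ := x.1.2.2.toAdd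

lemma heckeValue_letter (i : ℕ) :
    heckeValue (letter i : EvaluatedWord R r n ξ Q) = Tn R r n ξ Q i := rfl

lemma len_letter (i : ℕ) : len (letter i : EvaluatedWord R r n ξ Q) = 1 := rfl

lemma len_one : len (1 : EvaluatedWord R r n ξ Q) = 0 := rfl

lemma len_mul (x y : EvaluatedWord R r n ξ Q) : len (x * y) = len x + len y := rfl

lemma len_pow (x : EvaluatedWord R r n ξ Q) (a : ℕ) : len (x ^ a) = a * len x := by
  induction a with
  | zero => rw [pow_zero, len_one, zero_mul]
  | succ a ih => rw [pow_succ, len_mul, ih, Nat.succ_mul]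

lemma ext {x y : EvaluatedWord R r n ξ Q} (hh : heckeValue x = heckeValue y)
    (hw : groupValue x = groupValue y) (hl : len x = len y) : x = y :=
  Subtype.ext (Prod.ext hh (Prod.ext hw hl))

lemma heckeValue_ofList (l : List ℕ) :
    heckeValue (ofList l : EvaluatedWord R r n ξ Q) = Tw R r n ξ Q l := by
  rw [ofList, map_list_prod, List.map_map]
  rfl

lemma groupValue_ofList (l : List ℕ) :
    groupValue (ofList l : EvaluatedWord R r n ξ Q) = wprod r n l := by
  rw [ofList, map_list_prod, List.map_map]
  rfl

lemma ofList_cons (i : ℕ) (l : List ℕ) :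
    (ofList (i :: l) : EvaluatedWord R r n ξ Q) = letter i * ofList l := by
  rw [ofList, List.map_cons, List.prod_cons, ofList]

lemma len_ofList (l : List ℕ) : len (ofList l : EvaluatedWord R r n ξ Q) = l.length := by
  induction l with
  | nil => rfl
  | cons i l ih => rw [ofList_cons, len_mul, ih, List.length_cons, len_letter, add_comm]

lemma exists_ofList_eq (x : EvaluatedWord R r n ξ Q) : ∃ l, ofList l = x := by
  obtain ⟨_, y, rfl⟩ := x
  induction y using FreeMonoid.inductionOn' with
  | one => exact ⟨[], rfl⟩
  | of_mul i y ih =>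
    obtain ⟨l, hl⟩ := ih
    refine ⟨i :: l, Subtype.ext ?_⟩
    rw [ofList_cons, hl]
    exact (map_mul (evaluation R r n ξ Q) _ _).symm

lemma isBraidSeq_letter : IsBraidSeq (letter : ℕ → EvaluatedWord R r n ξ Q) n where
  commute i j hij := ext (isBraidSeq_Tn.commute i j hij) (isBraidSeq_gen.commute i j hij) rfl
  braid i h1 h := ext (isBraidSeq_Tn.braid i h1 h) (isBraidSeq_gen.braid i h1 h) rfl

variable (R r n ξ Q) in
/-- The span of the values of the words of length less than `k`. -/
def shorterSpan (k : ℕ) : Submodule R (Alg R r n ξ Q) :=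
  Submodule.span R (heckeValue '' {x | len x < k})

variable (R r n ξ Q) in
/-- The elements of the Hecke algebra which are combinations of words of length less than `k` in
the cocenter. -/
def cocenterShorterSpan (k : ℕ) : Submodule R (Alg R r n ξ Q) :=
  shorterSpan R r n ξ Q k ⊔ commutatorSubmodule R (Alg R r n ξ Q)

lemma heckeValue_mem_shorterSpan {x : EvaluatedWord R r n ξ Q} {k : ℕ} (h : len x < k) :
    heckeValue x ∈ shorterSpan R r n ξ Q k :=
  Submodule.subset_span ⟨x, h, rfl⟩

lemma mul_mul_mem_shorterSpan (u v : EvaluatedWord R r n ξ Q) {k : ℕ} {h : Alg R r n ξ Q}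
    (hh : h ∈ shorterSpan R r n ξ Q k) :
    heckeValue u * h * heckeValue v ∈ shorterSpan R r n ξ Q (len u + k + len v) := by
  induction hh using Submodule.span_induction with
  | mem _ hx =>
    obtain ⟨x, hx, rfl⟩ := hx
    have hlt : len (u * x * v) < len u + k + len v :=
      Nat.add_lt_add_right (Nat.add_lt_add_left hx _) _
    simpa only [map_mul] using heckeValue_mem_shorterSpan hlt
  | zero => simp only [mul_zero, zero_mul, zero_mem]
  | add x y _ _ hx hy => rw [mul_add, add_mul]; exact add_mem hx hy
  | smul a x _ hx => rw [mul_smul_comm, smul_mul_assoc]; exact Submodule.smul_mem _ _ hx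

lemma shorterSpan_le_cocenterShorterSpan (k : ℕ) :
    shorterSpan R r n ξ Q k ≤ cocenterShorterSpan R r n ξ Q k := le_sup_left

lemma commutator_mem_cocenterShorterSpan (a b : Alg R r n ξ Q) (k : ℕ) :
    a * b - b * a ∈ cocenterShorterSpan R r n ξ Q k :=
  Submodule.mem_sup_right (Submodule.subset_span ⟨a, b, rfl⟩)

lemma heckeValue_letter_sq_mem {i : ℕ} (h1 : 1 ≤ i) (h : i < n) :
    heckeValue (letter i * letter i) ∈
      shorterSpan R r n ξ Q (len (letter i * letter i : EvaluatedWord R r n ξ Q)) := by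
  rw [map_mul, heckeValue_letter, Tn_mul_self h1 h, ← heckeValue_letter, ← map_one heckeValue]
  exact add_mem (Submodule.smul_mem _ _ (heckeValue_mem_shorterSpan Nat.one_lt_two))
    (Submodule.smul_mem _ _ (heckeValue_mem_shorterSpan Nat.two_pos))

lemma heckeValue_letter_zero_pow_mem (hn : 1 ≤ n) :
    heckeValue (letter 0 ^ r) ∈
      shorterSpan R r n ξ Q (len (letter 0 ^ r : EvaluatedWord R r n ξ Q)) := by
  rw [map_pow, heckeValue_letter, len_pow, len_letter, mul_one]
  refine Submodule.span_mono ?_ (Tn_zero_pow_mem_span hn)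
  rintro _ ⟨a, ha, rfl⟩
  exact ⟨letter 0 ^ a, by rwa [Set.mem_ofPred_eq, len_pow, len_letter, mul_one],
    map_pow heckeValue _ _⟩

lemma isUnit_heckeValue (hξ : IsUnit ξ) {z : EvaluatedWord R r n ξ Q}
    (hz : z ∈ wordsIn letter (Set.Ioo 0 n)) : IsUnit (heckeValue z) := by
  induction hz using Submonoid.closure_induction with
  | mem _ hx =>
    obtain ⟨i, hi, rfl⟩ := hx
    exact isUnit_of_mul_self hξ (Tn_mul_self hi.1 hi.2)
  | one => rw [map_one]; exact isUnit_one
  | mul x y _ _ hx hy => rw [map_mul]; exact hx.mul hy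

/-- Words are compared by their lengths, by their values in `W_n` modulo `s`, and by their values in
the Hecke algebra modulo the submodule `P k`, where `k` is the length. -/
def filteredSetoid (s : Setoid (W r n)) (P : ℕ → Submodule R (Alg R r n ξ Q)) :
    Setoid (EvaluatedWord R r n ξ Q) where
  r x y := len x = len y ∧ s (groupValue x) (groupValue y) ∧
    heckeValue x - heckeValue y ∈ P (len x)
  iseqv :=
    { refl := fun x => ⟨rfl, s.refl _, by rw [sub_self]; exact zero_mem _⟩
      symm := fun ⟨hl, hw, hh⟩ => ⟨hl.symm, s.symm hw, by
        rw [← hl, ← neg_sub]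
        exact neg_mem hh⟩
      trans := fun ⟨hl, hw, hh⟩ ⟨hl', hw', hh'⟩ => ⟨hl.trans hl', s.trans hw hw', by
        rw [← hl] at hh'
        simpa only [sub_add_sub_cancel] using add_mem hh hh'⟩ }

variable (R r n ξ Q) in
/-- Words up to words of smaller length: two words are identified if they have the same length and
the same value in `W_n`, and if their values in the Hecke algebra agree up to shorter words. -/
def shorterCon : Con (EvaluatedWord R r n ξ Q) where
  toSetoid := filteredSetoid ⊥ (shorterSpan R r n ξ Q)
  mul' := by
    rintro x y z w ⟨hl, hw, hh⟩ ⟨hl', hw', hh'⟩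
    refine ⟨congrArg₂ (· + ·) hl hl', congrArg₂ (· * ·) hw hw', ?_⟩
    have hleft := mul_mul_mem_shorterSpan 1 z hh
    have hright := mul_mul_mem_shorterSpan y 1 hh'
    simp only [map_one, one_mul, mul_one, len_one, zero_add, add_zero, ← hl] at hleft hright
    have hsum := add_mem hleft hright
    rwa [sub_mul, mul_sub, sub_add_sub_cancel, ← map_mul, ← map_mul, ← len_mul] at hsum

variable (R r n ξ Q) in
/-- Words up to conjugation: two words are identified if they have the same length and conjugate
values in `W_n`, and if their values in the cocenter agree up to shorter words. -/
def cocenterSetoid : Setoid (EvaluatedWord R r n ξ Q) :=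
  filteredSetoid (IsConj.setoid _) (cocenterShorterSpan R r n ξ Q)

/-- A word is reducible if its conjugacy class contains the value of a shorter word and if its
value in the cocenter is a combination of shorter words. -/
structure Reducible (x : EvaluatedWord R r n ξ Q) : Prop where
  exists_shorter : ∃ y : EvaluatedWord R r n ξ Q, len y < len x ∧
    IsConj (groupValue y) (groupValue x)
  mem : heckeValue x ∈ cocenterShorterSpan R r n ξ Q (len x)

lemma Reducible.of_equiv {x y : EvaluatedWord R r n ξ Q} (h : cocenterSetoid R r n ξ Q x y)
    (hy : Reducible y) : Reducible x := by
  obtain ⟨hl, hw, hh⟩ := h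
  obtain ⟨⟨z, hz, hzy⟩, hmem⟩ := hy
  rw [← hl] at hz hmem
  exact ⟨⟨z, hz, hzy.trans hw.symm⟩, by simpa only [sub_add_cancel] using add_mem hh hmem⟩

lemma reducible_mul_mul {x : EvaluatedWord R r n ξ Q} (hl : 0 < len x) (hw : groupValue x = 1)
    (hh : heckeValue x ∈ shorterSpan R r n ξ Q (len x)) (u v : EvaluatedWord R r n ξ Q) :
    Reducible (u * x * v) where
  exists_shorter := ⟨u * v, by simp only [len_mul]; omega, by
    simp only [map_mul, hw, mul_one]
    exact IsConj.refl _⟩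
  mem := by
    rw [map_mul, map_mul, len_mul, len_mul]
    exact shorterSpan_le_cocenterShorterSpan _ (mul_mul_mem_shorterSpan u v hh)

lemma cocenterSetoid_of_shorterCon {x y : EvaluatedWord R r n ξ Q}
    (h : shorterCon R r n ξ Q x y) : cocenterSetoid R r n ξ Q x y :=
  ⟨h.1, h.2.1 ▸ IsConj.refl _, shorterSpan_le_cocenterShorterSpan _ h.2.2⟩

lemma cocenterSetoid_mul_comm (x y : EvaluatedWord R r n ξ Q) :
    cocenterSetoid R r n ξ Q (x * y) (y * x) := by
  refine ⟨Nat.add_comm _ _, isConj_iff.2 ⟨(groupValue x)⁻¹, ?_⟩, ?_⟩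
  · simp only [map_mul]
    group
  · rw [map_mul, map_mul]
    exact commutator_mem_cocenterShorterSpan _ _ _

/-- If `z x = y z` with `z` invertible, then `x = z⁻¹ (y z)` and `y = (y z) z⁻¹`. -/
lemma cocenterSetoid_of_semiconjBy (hξ : IsUnit ξ) {x y z : EvaluatedWord R r n ξ Q}
    (hz : z ∈ wordsIn letter (Set.Ioo 0 n)) (h : SemiconjBy z x y) :
    cocenterSetoid R r n ξ Q x y := by
  refine ⟨?_, ?_, ?_⟩
  · have hl : len z + len x = len y + len z := congrArg len h.eq
    omega
  · exact isConj_iff.2 ⟨groupValue z, mul_inv_eq_of_eq_mul (h.map groupValue).eq⟩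
  · obtain ⟨c, hc⟩ := isUnit_heckeValue hξ hz
    have hh := (h.map heckeValue).eq
    rw [← hc] at hh
    have hx : heckeValue x = ↑c⁻¹ * (heckeValue y * c) := by rw [← hh, Units.inv_mul_cancel_left]
    have hy : heckeValue y = heckeValue y * c * ↑c⁻¹ := by rw [Units.mul_inv_cancel_right]
    rw [hx]
    nth_rewrite 2 [hy]
    exact commutator_mem_cocenterShorterSpan _ _ _

lemma shorterCon_zero_conj (hξ : IsUnit ξ) (h : 1 < n) (a : ℕ) :
    shorterCon R r n ξ Q (letter 0 * (letter 1 * letter 0 ^ a * letter 1))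
      (letter 1 * letter 0 ^ a * letter 1 * letter 0) := by
  refine ⟨by rw [len_mul, len_mul (_ * _ * _), add_comm], (commute_gen_zero h a).eq, ?_⟩
  have hcomm := commutator_conj_pow_of_mul_self hξ (Tn_mul_self (R := R) (Q := Q) le_rfl h)
    (Tn_braid_zero h) a
  simp only [← heckeValue_letter, ← map_mul, ← map_pow] at hcomm
  rw [hcomm]
  refine sub_mem (Submodule.smul_mem _ _ (heckeValue_mem_shorterSpan ?_))
    (Submodule.smul_mem _ _ (heckeValue_mem_shorterSpan ?_)) <;>
  · simp only [len_mul, len_pow, len_letter]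
    omega

variable (R r n ξ Q) in
/-- Words up to shorter words, as a setting for the reduction of words to products of blocks. -/
def cocenterModel [NeZero r] (hn : 1 ≤ n) (hξ : IsUnit ξ) :
    CocenterModel (EvaluatedWord R r n ξ Q) (shorterCon R r n ξ Q).Quotient r n where
  g := letter
  φ := (shorterCon R r n ξ Q).mk'
  E := Setoid.ker (Quotient.map' (s₂ := cocenterSetoid R r n ξ Q) id
    fun _ _ => cocenterSetoid_of_shorterCon)
  D X := ∃ x : EvaluatedWord R r n ξ Q, ↑x = X ∧ Reducible x
  isBraidSeq := isBraidSeq_letter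
  equivalence := (Setoid.ker _).iseqv
  E_mul_comm X Y := Con.induction_on₂ X Y fun x y => Quotient.sound (cocenterSetoid_mul_comm x y)
  E_of_semiconjBy z x y hz h := Quotient.sound (cocenterSetoid_of_semiconjBy hξ hz h)
  commute_zero h a := (Con.eq _).2 (shorterCon_zero_conj hξ h a)
  D_of_E {X Y} hE hD := by
    obtain ⟨y, rfl, hy⟩ := hD
    induction X using Con.induction_on with
    | H x => exact ⟨x, rfl, hy.of_equiv (Quotient.exact hE)⟩
  D_sq i h1 h U V := Con.induction_on₂ U V fun u v =>
    ⟨u * (letter i * letter i) * v, rfl, reducible_mul_mul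
      (by rw [len_mul, len_letter]; exact Nat.two_pos) (gen_mul_self h1 h)
      (heckeValue_letter_sq_mem h1 h) u v⟩
  D_pow U V := Con.induction_on₂ U V fun u v =>
    ⟨u * letter 0 ^ r * v, rfl, reducible_mul_mul
      (by rw [len_pow, len_letter, mul_one]; exact NeZero.pos r)
      (by rw [map_pow]; exact gen_zero_pow)
      (heckeValue_letter_zero_pow_mem hn) u v⟩

lemma reducible_or_equiv_blocksWord [NeZero r] (hn : 1 ≤ n) (hξ : IsUnit ξ) {l : List ℕ}
    (hl : ∀ m ∈ l, m < n) :
    Reducible (ofList l : EvaluatedWord R r n ξ Q) ∨ ∃ L : List Block, (∀ b ∈ L, b.2 < r) ∧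
      totalSize L = n ∧ L.Pairwise (fun x y => sortKey x ≤ sortKey y) ∧
      cocenterSetoid R r n ξ Q (ofList l) (blocksWord letter 0 L) := by
  let c := cocenterModel R r n ξ Q hn hξ
  have hword : c.φ (ofList l) ∈ wordsIn c.letter (Set.Iio n) := by
    rw [ofList, map_list_prod, List.map_map]
    exact Submonoid.list_prod_mem _ fun _ hx => by
      obtain ⟨m, hm, rfl⟩ := List.mem_map.1 hx
      exact letter_mem_wordsIn (hl m hm)
  rcases CocenterModel.exists_sorted_blocks hword with ⟨x, hx, hred⟩ | ⟨L, hL, ht, hs, hE⟩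
  · have hequiv := cocenterSetoid_of_shorterCon ((Con.eq _).1 hx)
    exact Or.inl (hred.of_equiv (Setoid.symm' _ hequiv))
  · have hmap : blocksWord c.letter 0 L = c.φ (blocksWord letter 0 L) := (map_blocksWord ..).symm
    rw [hmap] at hE
    exact Or.inr ⟨L, hL, ht, hs, Quotient.exact hE⟩

lemma groupValue_comp_letter :
    groupValue ∘ (letter : ℕ → EvaluatedWord R r n ξ Q) = gen r n := rfl

lemma equiv_ofList_of_isConj [NeZero r] (hn : 1 ≤ n) (hξ : IsUnit ξ) {l l' : List ℕ}
    (hl : ∀ m ∈ l, m < n) (hl' : ∀ m ∈ l', m < n)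
    (h : ¬ Reducible (ofList l : EvaluatedWord R r n ξ Q))
    (h' : ¬ Reducible (ofList l' : EvaluatedWord R r n ξ Q))
    (hconj : IsConj (wprod r n l) (wprod r n l')) :
    cocenterSetoid R r n ξ Q (ofList l) (ofList l') := by
  obtain ⟨L, hL, ht, hs, hE⟩ := (reducible_or_equiv_blocksWord hn hξ hl).resolve_left h
  obtain ⟨L', hL', ht', hs', hE'⟩ := (reducible_or_equiv_blocksWord hn hξ hl').resolve_left h'
  have hblocks : IsConj (blocksWord (gen r n) 0 L) (blocksWord (gen r n) 0 L') := by
    have h1 : IsConj _ _ := hE.2.1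
    have h2 : IsConj _ _ := hE'.2.1
    rw [groupValue_ofList, map_blocksWord, groupValue_comp_letter] at h1 h2
    exact h1.symm.trans (hconj.trans h2)
  obtain rfl := eq_of_perm_of_sorted (perm_of_isConj hn hL ht hL' ht' hblocks) hs hs'
  exact Setoid.trans' _ hE (Setoid.symm' _ hE')

lemma prod_map_filter_lt {M : Type*} [Monoid M] {f : ℕ → M} {n : ℕ} (hf : ∀ i, n ≤ i → f i = 1)
    (l : List ℕ) : ((l.filter (· < n)).map f).prod = (l.map f).prod := by
  induction l with
  | nil => rfl
  | cons i l ih =>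
    by_cases hi : i < n
    · simp only [List.filter_cons, hi, decide_true, if_true, List.map_cons, List.prod_cons, ih]
    · simp only [List.filter_cons, hi, decide_false, Bool.false_eq_true, if_false, List.map_cons,
        List.prod_cons, ih, hf i (not_lt.1 hi), one_mul]

lemma Tw_filter_lt (l : List ℕ) : Tw R r n ξ Q (l.filter (· < n)) = Tw R r n ξ Q l :=
  prod_map_filter_lt (fun _ => Tn_of_ge) l

lemma ell_wprod_le (l : List ℕ) : ell r n (wprod r n l) ≤ l.length := by
  have hle : ell r n (wprod r n l) ≤ (l.filter (· < n)).length :=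
    Nat.sInf_le ⟨_, fun m hm => of_decide_eq_true (List.mem_filter.1 hm).2, rfl,
      prod_map_filter_lt (fun _ => gen_of_ge) l⟩
  exact hle.trans (List.length_filter_le _ _)

lemma not_reducible_ofList {l : List ℕ} (h : ∀ w, IsConj w (wprod r n l) → l.length ≤ ell r n w) :
    ¬ Reducible (ofList l : EvaluatedWord R r n ξ Q) := by
  rintro ⟨⟨y, hlen, hconj⟩, -⟩
  obtain ⟨l', rfl⟩ := exists_ofList_eq y
  rw [len_ofList, len_ofList] at hlen
  rw [groupValue_ofList, groupValue_ofList] at hconj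
  exact hlen.not_ge ((h _ hconj).trans (ell_wprod_le l'))

lemma cocenterShorterSpan_le {U : Submodule R (Alg R r n ξ Q)} {k : ℕ}
    (hU : commutatorSubmodule R (Alg R r n ξ Q) ≤ U)
    (h : ∀ l : List ℕ, l.length < k → Tw R r n ξ Q l ∈ U) :
    cocenterShorterSpan R r n ξ Q k ≤ U := by
  refine sup_le (Submodule.span_le.2 ?_) hU
  rintro _ ⟨x, hx, rfl⟩
  obtain ⟨l, rfl⟩ := exists_ofList_eq x
  rw [Set.mem_ofPred_eq, len_ofList] at hx
  rw [heckeValue_ofList]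
  exact h l hx

/-- By induction on the length: a reducible word is a combination of shorter ones, and any other
word agrees up to shorter words with the chosen irreducible word of its class. -/
lemma Tw_mem_of_minimal_mem [NeZero r] (hn : 1 ≤ n) (hξ : IsUnit ξ)
    {wC : ConjClasses (W r n) → List ℕ} (hrange : ∀ C, ∀ m ∈ wC C, m < n)
    (hmem : ∀ C, ConjClasses.mk (wprod r n (wC C)) = C)
    (hmin : ∀ C w, ConjClasses.mk w = C → (wC C).length ≤ ell r n w)
    {U : Submodule R (Alg R r n ξ Q)} (hU : commutatorSubmodule R (Alg R r n ξ Q) ≤ U)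
    (hC : ∀ C, Tw R r n ξ Q (wC C) ∈ U) (l : List ℕ) : Tw R r n ξ Q l ∈ U := by
  have hirred : ∀ C, ¬ Reducible (ofList (wC C) : EvaluatedWord R r n ξ Q) := fun C =>
    not_reducible_ofList fun w hw =>
      hmin C w ((ConjClasses.mk_eq_mk_iff_isConj.2 hw).trans (hmem C))
  induction hk : l.length using Nat.strong_induction_on generalizing l with
  | _ k ih =>
    subst hk
    by_cases hl : ∀ m ∈ l, m < n
    · have hshorter := cocenterShorterSpan_le hU fun l' hl' => ih _ hl' l' rfl
      by_cases hred : Reducible (ofList l : EvaluatedWord R r n ξ Q)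
      · have hlower := hred.mem
        rw [len_ofList, heckeValue_ofList] at hlower
        exact hshorter hlower
      · have hconj := ConjClasses.mk_eq_mk_iff_isConj.1 (hmem (ConjClasses.mk (wprod r n l))).symm
        have hsub := (equiv_ofList_of_isConj hn hξ hl (hrange _) hred (hirred _) hconj).2.2
        rw [len_ofList, heckeValue_ofList, heckeValue_ofList] at hsub
        simpa only [sub_add_cancel] using
          add_mem (hshorter hsub) (hC (ConjClasses.mk (wprod r n l)))
    · push Not at hl
      obtain ⟨m, hm, hmn⟩ := hl
      rw [← Tw_filter_lt]
      refine ih _ (List.length_filter_lt_length_iff_exists.2 ⟨m, hm, ?_⟩) _ rfl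
      simpa only [decide_eq_true_eq, not_lt] using hmn

end EvaluatedWord

variable {R r n ξ Q}

lemma span_range_Tw : Submodule.span R (Set.range (Tw R r n ξ Q)) = ⊤ := by
  have himage : Set.range (T R r n ξ Q) =
      RingQuot.mkAlgHom R (rel R r n ξ Q) '' Set.range (FreeAlgebra.ι R) := by
    rw [← Set.range_comp]
    rfl
  have hadjoin : Algebra.adjoin R (Set.range (T R r n ξ Q)) = ⊤ := by
    rw [himage, ← AlgHom.map_adjoin, FreeAlgebra.adjoin_range_ι, Algebra.map_top,
      AlgHom.range_eq_top]
    exact RingQuot.mkAlgHom_surjective R _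
  rw [← top_le_iff, ← Algebra.top_toSubmodule, ← hadjoin, Algebra.adjoin_eq_span]
  refine Submodule.span_mono fun x hx => ?_
  induction hx using Submonoid.closure_induction with
  | mem _ hx =>
    obtain ⟨i, rfl⟩ := hx
    exact ⟨[i], by rw [Tw, List.map_singleton, List.prod_singleton, Tn_of_lt i.isLt]⟩
  | one => exact ⟨[], rfl⟩
  | mul _ _ _ _ hx hy =>
    obtain ⟨l, rfl⟩ := hx
    obtain ⟨l', rfl⟩ := hy
    exact ⟨l ++ l', by rw [Tw, List.map_append, List.prod_append, Tw, Tw]⟩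

lemma eq_top_of_minimal_mem [NeZero r] (hn : 1 ≤ n) (hξ : IsUnit ξ)
    {wC : ConjClasses (W r n) → List ℕ} (hrange : ∀ C, ∀ m ∈ wC C, m < n)
    (hmem : ∀ C, ConjClasses.mk (wprod r n (wC C)) = C)
    (hmin : ∀ C w, ConjClasses.mk w = C → (wC C).length ≤ ell r n w)
    {U : Submodule R (Alg R r n ξ Q)} (hU : commutatorSubmodule R (Alg R r n ξ Q) ≤ U)
    (hC : ∀ C, Tw R r n ξ Q (wC C) ∈ U) : U = ⊤ := by
  rw [← top_le_iff, ← span_range_Tw, Submodule.span_le]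
  rintro _ ⟨l, rfl⟩
  exact EvaluatedWord.Tw_mem_of_minimal_mem hn hξ hrange hmem hmin hU hC l

end EvaluatedWords

end CyclotomicCocenter

open CRG CHA in
/-- Over any commutative unital ring `R`, with `ξ ∈ R^×` and
`Q_1, …, Q_r ∈ R`, the images of the elements `T_{w_C}` (for any choice of minimal length
representatives `w_C ∈ C_min` with fixed reduced expressions) span the cocenter
`Tr(H_{n,R}) = H_{n,R} ⧸ [H_{n,R}, H_{n,R}]` as an `R`-module. -/
theorem cocenter_spanned_by_minimal_conjugacy_representatives
    (r n : ℕ) (hr : 1 ≤ r) (hn : 1 ≤ n)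
    (R : Type) [CommRing R] (ξ : R) (hξ : IsUnit ξ) (Q : Fin r → R)
    (wC : ConjClasses (W r n) → List ℕ)
    (hrange : ∀ C, ∀ m ∈ wC C, m < n)
    (hmem : ∀ C, ConjClasses.mk (wprod r n (wC C)) = C)
    (hmin : ∀ C, ∀ u : W r n, ConjClasses.mk u = C →
      ell r n (wprod r n (wC C)) ≤ ell r n u)
    (hred : ∀ C, (wC C).length = ell r n (wprod r n (wC C))) :
    Submodule.span R
      (Set.range (fun C : ConjClasses (W r n) =>
        (Submodule.Quotient.mk (Tw R r n ξ Q (wC C)) :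
          Alg R r n ξ Q ⧸ commutatorSubmodule R (Alg R r n ξ Q)))) = ⊤ := by
  have : NeZero r := ⟨by omega⟩
  set V := Submodule.span R (Set.range fun C : ConjClasses (W r n) =>
    (Submodule.Quotient.mk (Tw R r n ξ Q (wC C)) :
      Alg R r n ξ Q ⧸ commutatorSubmodule R (Alg R r n ξ Q)))
  let π := (commutatorSubmodule R (Alg R r n ξ Q)).mkQ
  have hker : commutatorSubmodule R (Alg R r n ξ Q) ≤ V.comap π :=
    (Submodule.ker_mkQ _).ge.trans (LinearMap.ker_le_comap _)
  have htop : V.comap π = ⊤ :=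
    CyclotomicCocenter.eq_top_of_minimal_mem hn hξ hrange hmem
      (fun C w hw => (hred C).trans_le (hmin C w hw)) hker fun C => Submodule.subset_span ⟨C, rfl⟩
  rw [← Submodule.map_comap_eq_of_surjective (Submodule.mkQ_surjective _) V, htop,
    Submodule.map_top, Submodule.range_mkQ]
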